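/- arXiv:2504.11768 — 2 statements merged into one kernel-verified Lean document; each statement's English description precedes it below -/
import Mathlib

section
/- Let (T, R, A) be weakly G-approximable. Then for every i ∈ ℤ and every F ∈ R_i there is a sequence E_1 → E_2 → E_3 → ⋯ with compatible maps to F such that Cone(E_n → F) ∈ R_{i+n} and E_n ∈ Ḡ^{(-∞,A-i]} for all n ≥ 1, the non-canonical map Hocolim E_n → F is an isomorphism, and in particular F ∈ Ḡ^{(-∞,A-i+1]}. The analogous statement holds for F ∈ R_i ∩ T̄^c when (T, R, A) is only weakly G-quasiapproximable. -/
namespace GApprox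

open CategoryTheory CategoryTheory.Limits CategoryTheory.Pretriangulated

universe w v u

variable (C : Type u) [Category.{v} C] [HasZeroObject C] [HasShift C ℤ]
  [Preadditive C] [∀ n : ℤ, (shiftFunctor C n).Additive] [Pretriangulated C]
  [HasCoproducts.{v} C]

/-- The right orthogonal of a class of objects. -/
def rOrth (A : Set C) : Set C := {X | ∀ a ∈ A, ∀ f : a ⟶ X, f = 0}

/-- The left orthogonal of a class of objects. -/
def lOrth (A : Set C) : Set C := {X | ∀ a ∈ A, ∀ f : X ⟶ a, f = 0}

/-- `Hom(A, B) = 0`. -/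
def homZero (A B : Set C) : Prop := ∀ a ∈ A, ∀ b ∈ B, ∀ f : a ⟶ b, f = 0

/-- The star operation `A ⋆ B`: objects `Y` admitting a distinguished triangle
`X ⟶ Y ⟶ Z ⟶ ΣX` with `X ∈ A` and `Z ∈ B`. -/
def starSet (A B : Set C) : Set C :=
  {Y | ∃ (X Z : C) (f : X ⟶ Y) (g : Y ⟶ Z) (h : Z ⟶ X⟦(1 : ℤ)⟧),
    Triangle.mk f g h ∈ (distTriang C) ∧ X ∈ A ∧ Z ∈ B}

/-- The (strictly full) shift `Σⁿ A` of a class of objects. -/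
def shiftSet (n : ℤ) (A : Set C) : Set C :=
  {X | ∃ a ∈ A, Nonempty (X ≅ (shiftFunctor C n).obj a)}

/-- An object is compact if any map to a coproduct factors through a finite subcoproduct. -/
def IsCompactObj (X : C) : Prop :=
  ∀ (α : Type v) (f : α → C) (g : X ⟶ ∐ f),
    ∃ (s : Finset α) (h : X ⟶ ∐ (fun i : {a : α // a ∈ s} => f i.1)),
      g = h ≫ Sigma.desc (fun i => Sigma.ι f i.1)

/-- The class of compact objects `T^c`. -/
def compacts : Set C := {X | IsCompactObj C X}

/-- The category is compactly generated. -/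
def CompactlyGenerated : Prop :=
  ∀ X : C, (∀ K ∈ compacts C, ∀ f : K ⟶ X, f = 0) → IsZero X

/-- Closure under direct summands (retracts), `smd`. -/
def smd (A : Set C) : Set C :=
  {X | ∃ Y ∈ A, ∃ (i : X ⟶ Y) (r : Y ⟶ X), i ≫ r = 𝟙 X}

/-- Closure of a class of objects under finite direct sums and extensions (`coprod`). -/
inductive extClosure (U : Set C) : C → Prop
  | of {X : C} : X ∈ U → extClosure U X
  | zero {X : C} : IsZero X → extClosure U X
  | ext {X Y Z : C} (f : X ⟶ Y) (g : Y ⟶ Z) (h : Z ⟶ X⟦(1 : ℤ)⟧) :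
      Triangle.mk f g h ∈ (distTriang C) → extClosure U X → extClosure U Z → extClosure U Y

/-- Closure of a class of objects under arbitrary coproducts, extensions and
direct summands. -/
inductive bigClosure (U : Set C) : C → Prop
  | of {X : C} : X ∈ U → bigClosure U X
  | zero {X : C} : IsZero X → bigClosure U X
  | coprod {α : Type v} (f : α → C) :
      (∀ i, bigClosure U (f i)) → ∀ {X : C}, (X ≅ ∐ f) → bigClosure U X
  | ext {X Y Z : C} (f : X ⟶ Y) (g : Y ⟶ Z) (h : Z ⟶ X⟦(1 : ℤ)⟧) :
      Triangle.mk f g h ∈ (distTriang C) → bigClosure U X → bigClosure U Z → bigClosure U Y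
  | retract {X Y : C} (i : X ⟶ Y) (r : Y ⟶ X) :
      i ≫ r = 𝟙 X → bigClosure U Y → bigClosure U X

/-- Closure of a class of objects under finite direct sums, `add`. -/
def addClosure (U : Set C) : Set C :=
  {X | ∃ (n : ℕ) (f : ULift.{v} (Fin n) → C), (∀ i, f i ∈ U) ∧ Nonempty (X ≅ ∐ f)}

/-- Closure of a class of objects under arbitrary coproducts, `Add`. -/
def bigAddClosure (U : Set C) : Set C :=
  {X | ∃ (α : Type v) (f : α → C), (∀ i, f i ∈ U) ∧ Nonempty (X ≅ ∐ f)}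

/-- `coprod_n(U)`. -/
def coprodPow (U : Set C) : ℕ → Set C
  | 0 => {X | IsZero X}
  | n + 1 => starSet C (addClosure C U) (coprodPow U n)

/-- `Coprod_n(U)`. -/
def coprodPowBig (U : Set C) : ℕ → Set C
  | 0 => {X | IsZero X}
  | n + 1 => starSet C (bigAddClosure C U) (coprodPowBig U n)

/-- `G[a,b] = ∪ { G^m : a ≤ m ≤ b }`. -/
def unionIcc (G : ℤ → Set C) (a b : ℤ) : Set C := ⋃ m ∈ Set.Icc a b, G m

/-- `G(-∞,b] = ∪ { G^m : m ≤ b }`. -/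
def unionIic (G : ℤ → Set C) (b : ℤ) : Set C := ⋃ m ∈ Set.Iic b, G m

/-- `G(-∞,∞) = ∪ { G^m : m ∈ ℤ }`. -/
def unionAll (G : ℤ → Set C) : Set C := ⋃ m : ℤ, G m

/-- `G^{[a,b]} = smd(coprod(G[a,b]))`. -/
def gInt (G : ℤ → Set C) (a b : ℤ) : Set C :=
  smd C {X | extClosure C (unionIcc C G a b) X}

/-- `G^{(-∞,b]} = smd(coprod(G(-∞,b]))`. -/
def gIic (G : ℤ → Set C) (b : ℤ) : Set C :=
  smd C {X | extClosure C (unionIic C G b) X}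

/-- `G^{[a,b]}_k = smd(coprod_k(G[a,b]))`. -/
def gIntPow (G : ℤ → Set C) (a b k : ℤ) : Set C :=
  smd C (coprodPow C (unionIcc C G a b) k.toNat)

/-- `Ḡ^{[a,b]}`. -/
def gBarInt (G : ℤ → Set C) (a b : ℤ) : Set C :=
  {X | bigClosure C (unionIcc C G a b) X}

/-- `Ḡ^{(-∞,b]}`. -/
def gBarIic (G : ℤ → Set C) (b : ℤ) : Set C :=
  {X | bigClosure C (unionIic C G b) X}

/-- `Ḡ^{[a,b]}_k = smd(Coprod_k(G[a,b]))`. -/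
def gBarIntPow (G : ℤ → Set C) (a b k : ℤ) : Set C :=
  smd C (coprodPowBig C (unionIcc C G a b) k.toNat)

/-- `M^G_n := G^{(-∞,-n]}`. -/
def MG (G : ℤ → Set C) (n : ℤ) : Set C := gIic C G (-n)

/-- `R^G_n := ⊥((M^G_n)^⊥)`, orthogonals taken in the whole category. -/
def RG (G : ℤ → Set C) (n : ℤ) : Set C := lOrth C (rOrth C (MG C G n))

/-- A pre-generating sequence. -/
structure IsPreGenSeq (G : ℤ → Set C) : Prop where
  compact : ∀ i : ℤ, G i ⊆ compacts C
  generates : smd C {X | extClosure C (unionAll C G) X} = compacts C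

/-- A generating sequence. -/
structure IsGenSeq (G : ℤ → Set C) extends IsPreGenSeq C G : Prop where
  shift_cond : ∀ n : ℤ,
    shiftSet C (-1) (G n) ∪ G n ∪ shiftSet C 1 (G n) ⊆ gInt C G (n - 1) (n + 1)

/-- A finite generating sequence. -/
structure IsFinGenSeq (G : ℤ → Set C) extends IsGenSeq C G : Prop where
  finite : ∀ i : ℤ, (G i).Finite

/-- ℕ-equivalence of generating sequences. -/
def GenSeqNEquiv (G G' : ℤ → Set C) : Prop :=
  ∃ N : ℤ, 0 ≤ N ∧ (∀ n : ℤ, G' n ⊆ gInt C G (n - N) (n + N)) ∧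
    ∀ n : ℤ, G n ⊆ gInt C G' (n - N) (n + N)

/-- ℕ-equivalence of (extended good) metrics. -/
def MetricNEquiv (M N : ℤ → Set C) : Prop :=
  ∃ n : ℤ, 0 ≤ n ∧ (∀ i : ℤ, M (i + n) ⊆ N i) ∧ ∀ i : ℤ, N (i + n) ⊆ M i

/-- An extended good metric. -/
structure IsExtGoodMetric (M : ℤ → Set C) : Prop where
  zero_mem : ∀ (n : ℤ) (X : C), IsZero X → X ∈ M n
  iso_closed : ∀ (n : ℤ) ⦃X Y : C⦄, (X ≅ Y) → X ∈ M n → Y ∈ M n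
  star_subset : ∀ n : ℤ, starSet C (M n) (M n) ⊆ M n
  shift_one : ∀ n : ℤ, shiftSet C 1 (M (n + 1)) ⊆ M n
  antitone : ∀ n : ℤ, M (n + 1) ⊆ M n
  shift_neg_one : ∀ n : ℤ, shiftSet C (-1) (M (n + 1)) ⊆ M n

/-- An orthogonal metric. -/
structure IsOrthMetric (M : ℤ → Set C) extends IsExtGoodMetric C M : Prop where
  orth : ∀ n : ℤ, lOrth C (rOrth C (M n)) = M n

/-- The closure of the compacts `T̄^c := ∩ₙ T^c ⋆ Rₙ`. -/
def closCompacts (Rm : ℤ → Set C) : Set C := ⋂ n : ℤ, starSet C (compacts C) (Rm n)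

/-- `(T, R, A)` is `G`-preapproximable. -/
structure IsGPreApprox (G Rm : ℤ → Set C) (A : ℤ) : Prop where
  orthMetric : IsOrthMetric C Rm
  A_pos : 0 < A
  cond0 : ∀ i : ℤ, MG C G i ⊆ ⋃ n ∈ {n : ℤ | |n| ≤ A}, shiftSet C n (MG C G (i + 1))
  cond1 : ∀ i : ℤ, MG C G (i + A) ⊆ Rm i ∩ compacts C
  cond2 : ∀ n : ℤ, ∃ N : ℤ, ∀ i : ℤ, N ≤ i → homZero C (G n) (Rm i)

/-- There is a distinguished triangle `E ⟶ F ⟶ D ⟶ ΣE` with `E ∈ S` and `D ∈ D`. -/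
def approxTriangle (F : C) (S D : Set C) : Prop :=
  ∃ (E Dd : C) (f : E ⟶ F) (g : F ⟶ Dd) (h : Dd ⟶ E⟦(1 : ℤ)⟧),
    Triangle.mk f g h ∈ (distTriang C) ∧ E ∈ S ∧ Dd ∈ D

/-- `(T, R, A)` is weakly `G`-approximable. -/
structure IsWeakGApprox (G Rm : ℤ → Set C) (A : ℤ) extends IsGPreApprox C G Rm A : Prop where
  hom_vanish : ∀ n i : ℤ, A ≤ n + i → homZero C (G n) (Rm i)
  approx : ∀ i : ℤ, ∀ F ∈ Rm i,
    approxTriangle C F (gBarInt C G (-A - i) (A - i)) (Rm (i + 1))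

/-- `(T, R, A)` is `G`-approximable. -/
structure IsGApprox (G Rm : ℤ → Set C) (A : ℤ) extends IsWeakGApprox C G Rm A : Prop where
  approx' : ∀ i : ℤ, ∀ F ∈ Rm i,
    approxTriangle C F (gBarIntPow C G (-A - i) (A - i) A) (Rm (i + 1))

/-- `(T, R, A)` is weakly `G`-quasiapproximable. -/
structure IsWeakGQuasiApprox (G Rm : ℤ → Set C) (A : ℤ) extends IsGPreApprox C G Rm A : Prop where
  hom_vanish : ∀ n i : ℤ, A ≤ n + i → homZero C (G n) (Rm i)
  approx : ∀ i : ℤ, ∀ F ∈ Rm i ∩ closCompacts C Rm,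
    approxTriangle C F (gBarInt C G (-A - i) (A - i)) (Rm (i + 1) ∩ closCompacts C Rm)

/-- `(T, R, A)` is `G`-quasiapproximable. -/
structure IsGQuasiApprox (G Rm : ℤ → Set C) (A : ℤ) extends IsWeakGQuasiApprox C G Rm A : Prop where
  approx' : ∀ i : ℤ, ∀ F ∈ Rm i ∩ closCompacts C Rm,
    approxTriangle C F (gBarIntPow C G (-A - i) (A - i) A) (Rm (i + 1) ∩ closCompacts C Rm)

/-- The coproduct of a sequence of objects. -/
noncomputable def seqCoprod (E : ℕ → C) : C := ∐ (fun n : ULift.{v} ℕ => E n.down)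

/-- The canonical inclusion into the coproduct of a sequence. -/
noncomputable def seqInj (E : ℕ → C) (n : ℕ) : E n ⟶ seqCoprod C E :=
  Sigma.ι (fun n : ULift.{v} ℕ => E n.down) (ULift.up n)

/-- The map `1 - shift` on the coproduct of a sequence. -/
noncomputable def oneMinusShift (E : ℕ → C) (e : ∀ n, E n ⟶ E (n + 1)) :
    seqCoprod C E ⟶ seqCoprod C E :=
  Sigma.desc (fun n => seqInj C E n.down - e n.down ≫ seqInj C E (n.down + 1))

/-- `H`, equipped with `π`, `δ`, is a homotopy colimit of the sequence `E`. -/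
def IsHocolim (E : ℕ → C) (e : ∀ n, E n ⟶ E (n + 1)) (H : C)
    (π : seqCoprod C E ⟶ H) (δ : H ⟶ (seqCoprod C E)⟦(1 : ℤ)⟧) : Prop :=
  Triangle.mk (oneMinusShift C E e) π δ ∈ (distTriang C)

/-- A single compact generator. -/
def IsCompactGenerator (G₀ : C) : Prop :=
  IsCompactObj C G₀ ∧ ∀ X : C, (∀ n : ℤ, ∀ f : (shiftFunctor C n).obj G₀ ⟶ X, f = 0) → IsZero X

/-- The strictly full subcategory `{Σʲ G₀}`. -/
def singletonShift (G₀ : C) (j : ℤ) : Set C :=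
  {X | Nonempty (X ≅ (shiftFunctor C j).obj G₀)}

/-- The generating sequence `Gⁿ := {Σ⁻ⁿ G₀}`. -/
def genSeqNeg (G₀ : C) (n : ℤ) : Set C := singletonShift C G₀ (-n)

/-- The generating sequence `Gⁿ := {Σⁿ G₀}`. -/
def genSeqPos (G₀ : C) (n : ℤ) : Set C := singletonShift C G₀ n

/-- The conclusion of STATEMENT 9 for an object `F ∈ R_i` (resp. `F ∈ R_i ∩ T̄^c`): there is a
sequence `E_1 → E_2 → ⋯` with compatible maps to `F`, with `Cone(E_n → F) ∈ R_{i+n}` and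
`E_n ∈ Ḡ^{(-∞,A-i]}` for all `n ≥ 1`, the non-canonical map `Hocolim Eₙ → F` is an
isomorphism, and `F ∈ Ḡ^{(-∞,A-i+1]}`. -/
def ApproxSeqConcl (G Rm : ℤ → Set C) (A i : ℤ) (F : C) : Prop :=
  (∃ (E : ℕ → C) (e : ∀ n, E n ⟶ E (n + 1)) (φ : ∀ n, E n ⟶ F),
    (∀ n, e n ≫ φ (n + 1) = φ n) ∧
    (∀ n : ℕ, E n ∈ gBarIic C G (A - i)) ∧
    (∀ n : ℕ, ∃ (D : C) (g : F ⟶ D) (h : D ⟶ (E n)⟦(1 : ℤ)⟧),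
      Triangle.mk (φ n) g h ∈ (distTriang C) ∧ D ∈ Rm (i + (n : ℤ) + 1)) ∧
    ∀ (H : C) (π : seqCoprod C E ⟶ H) (δ : H ⟶ (seqCoprod C E)⟦(1 : ℤ)⟧),
      IsHocolim C E e H π δ →
      ∀ h : H ⟶ F, (∀ n, seqInj C E n ≫ π ≫ h = φ n) → IsIso h) ∧
  F ∈ gBarIic C G (A - i + 1)

/-! The map `E n ⟶ F` with cone `D ∈ R (i + n + 1)` is refined by approximating `D` by `E'` and
pulling the triangle `E n ⟶ F ⟶ D` back along `E' ⟶ D`. Since `R (i + n + 2)` is a left orthogonal,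
whether the cone of the refined map lies in it can be tested on Hom groups, where the four lemma
applies. Compact objects are left orthogonal to `R j` for large `j`, so `Hom(K, E n) ⟶ Hom(K, F)` is
bijective for each compact `K` and all large `n`. A map from compact `K` to the homotopy colimit
factors through some `E n`, so compact generation makes the map from the homotopy colimit to `F` an
isomorphism. In the quasi-approximable case the construction stays inside the closure of the
compacts because that closure is a triangulated subcategory. -/

open Filter Function ObjectProperty ZeroObject

lemma exists_seq_of_forall_exists {α : Type*} {p : ℕ → α → Prop} {r : α → α → Prop}
    (h₀ : ∃ x, p 0 x) (hsucc : ∀ n x, p n x → ∃ y, p (n + 1) y ∧ r x y) :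
    ∃ x : ℕ → α, (∀ n, p n (x n)) ∧ ∀ n, r (x n) (x (n + 1)) := by
  choose! next hnext hr using hsucc
  obtain ⟨x₀, hx₀⟩ := h₀
  let x : ℕ → α := Nat.rec x₀ next
  have hx : ∀ n, p n (x n) := Nat.rec hx₀ fun n => hnext n (x n)
  exact ⟨x, hx, fun n => hr n (x n) (hx n)⟩

section Preadditive

variable {T : Type*} [Category T] [Preadditive T]

lemma injective_comp_left_iff {X Y : T} (f : X ⟶ Y) (V : T) :
    Injective (fun u : Y ⟶ V => f ≫ u) ↔ ∀ u : Y ⟶ V, f ≫ u = 0 → u = 0 :=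
  injective_iff_map_eq_zero (Preadditive.leftComp V f)

lemma injective_comp_right_iff {X Y : T} (K : T) (f : X ⟶ Y) :
    Injective (fun u : K ⟶ X => u ≫ f) ↔ ∀ u : K ⟶ X, u ≫ f = 0 → u = 0 :=
  injective_iff_map_eq_zero (Preadditive.rightComp K f)

/-- The objects left orthogonal to `M i` for all large `i`. -/
def eventuallyLOrth (M : ℤ → Set T) : Set T := {K | ∀ᶠ i in atTop, K ∈ lOrth T (M i)}

lemma smd_subset_eventuallyLOrth {S : Set T} {M : ℤ → Set T} (hS : S ⊆ eventuallyLOrth M) :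
    smd T S ⊆ eventuallyLOrth M := by
  rintro K ⟨Y, hY, i, r, hir⟩
  filter_upwards [hS hY] with n hn V hV u
  rw [← Category.id_comp u, ← hir, Category.assoc, hn V hV (r ≫ u), comp_zero]

end Preadditive

section Pretriangulated

variable {T : Type*} [Category T] [HasZeroObject T] [HasShift T ℤ] [Preadditive T]
  [∀ n : ℤ, (shiftFunctor T n).Additive] [Pretriangulated T]

/-- The morphisms some cone of which lies in `S`. This is `ObjectProperty.trW`, spelled as the
cone condition of `ApproxSeqConcl`. -/
def HasConeIn (S : Set T) {X Y : T} (f : X ⟶ Y) : Prop :=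
  ∃ (Z : T) (g : Y ⟶ Z) (h : Z ⟶ X⟦(1 : ℤ)⟧), Triangle.mk f g h ∈ distTriang T ∧ Z ∈ S

lemma HasConeIn.mono {S S' : Set T} (hS : S ⊆ S') {X Y : T} {f : X ⟶ Y} (hf : HasConeIn S f) :
    HasConeIn S' f :=
  let ⟨Z, g, h, hT, hZ⟩ := hf
  ⟨Z, g, h, hT, hS hZ⟩

lemma approxTriangle_mono {S S' D D' : Set T} (hS : S ⊆ S') (hD : D ⊆ D') {F : T}
    (hF : approxTriangle T F S D) : approxTriangle T F S' D' :=
  let ⟨E, Z, f, g, h, hT, hE, hZ⟩ := hF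
  ⟨E, Z, f, g, h, hT, hS hE, hD hZ⟩

lemma exists_eq_shift_mor₁_comp {A : Triangle T} (hA : A ∈ distTriang T) {V : T}
    (u : A.obj₁⟦(1 : ℤ)⟧ ⟶ V) (hu : A.mor₃ ≫ u = 0) : ∃ v, u = A.mor₁⟦(1 : ℤ)⟧' ≫ v := by
  obtain ⟨v, hv⟩ := Triangle.yoneda_exact₃ _ (rot_of_distTriang _ hA) u hu
  exact ⟨-v, hv.trans ((Preadditive.neg_comp _ _).trans (Preadditive.comp_neg _ _).symm)⟩

lemma exists_eq_shift_mor₂_comp {A : Triangle T} (hA : A ∈ distTriang T) {V : T}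
    (u : A.obj₂⟦(1 : ℤ)⟧ ⟶ V) (hu : A.mor₁⟦(1 : ℤ)⟧' ≫ u = 0) :
    ∃ v, u = A.mor₂⟦(1 : ℤ)⟧' ≫ v :=
  exists_eq_shift_mor₁_comp (rot_of_distTriang _ hA) u
    ((Preadditive.neg_comp _ _).trans (neg_eq_zero.2 hu))

lemma exists_eq_comp_shift_mor₁ {A : Triangle T} (hA : A ∈ distTriang T) {V : T}
    (u : V ⟶ A.obj₂⟦(1 : ℤ)⟧) (hu : u ≫ A.mor₂⟦(1 : ℤ)⟧' = 0) :
    ∃ v, u = v ≫ A.mor₁⟦(1 : ℤ)⟧' := by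
  have hu' : u ≫ (-A.mor₂⟦(1 : ℤ)⟧') = 0 := (Preadditive.comp_neg _ _).trans (neg_eq_zero.2 hu)
  obtain ⟨v, hv⟩ :=
    Triangle.coyoneda_exact₃ _ (rot_of_distTriang _ (rot_of_distTriang _ hA)) u hu'
  exact ⟨-v, hv.trans ((Preadditive.comp_neg _ _).trans (Preadditive.neg_comp _ _).symm)⟩

lemma obj₃_mem_lOrth_iff {A : Triangle T} (hA : A ∈ distTriang T) (W : Set T) :
    A.obj₃ ∈ lOrth T W ↔ ∀ V ∈ W, Injective (fun u : A.obj₂ ⟶ V => A.mor₁ ≫ u) ∧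
      Surjective (fun u : A.obj₂⟦(1 : ℤ)⟧ ⟶ V => A.mor₁⟦(1 : ℤ)⟧' ≫ u) := by
  refine forall₂_congr fun V _ => ⟨fun hV => ⟨?_, fun v => ?_⟩, fun ⟨hinj, hsurj⟩ w => ?_⟩
  · refine (injective_comp_left_iff _ _).2 fun u hu => ?_
    obtain ⟨w, rfl⟩ := Triangle.yoneda_exact₂ _ hA u hu
    rw [hV w, comp_zero]
  · obtain ⟨u, hu⟩ := exists_eq_shift_mor₁_comp hA v (hV _)
    exact ⟨u, hu.symm⟩
  · have hw : A.mor₂ ≫ w = 0 := (injective_comp_left_iff _ _).1 hinj _ (by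
      rw [comp_distTriang_mor_zero₁₂_assoc _ hA, zero_comp])
    obtain ⟨v, rfl⟩ := Triangle.yoneda_exact₃ _ hA w hw
    obtain ⟨u, rfl⟩ := hsurj v
    exact (comp_distTriang_mor_zero₃₁_assoc _ hA u).trans zero_comp

lemma hasConeIn_lOrth_iff {X Y : T} (f : X ⟶ Y) (W : Set T) :
    HasConeIn (lOrth T W) f ↔ ∀ V ∈ W, Injective (fun u : Y ⟶ V => f ≫ u) ∧
      Surjective (fun u : Y⟦(1 : ℤ)⟧ ⟶ V => f⟦(1 : ℤ)⟧' ≫ u) := by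
  refine ⟨fun ⟨Z, g, h, hT, hZ⟩ => (obj₃_mem_lOrth_iff hT W).1 hZ, fun hf => ?_⟩
  obtain ⟨Z, g, h, hT⟩ := distinguished_cocone_triangle f
  exact ⟨Z, g, h, hT, (obj₃_mem_lOrth_iff hT W).2 hf⟩

lemma hasConeIn_lOrth_id (W : Set T) (X : T) : HasConeIn (lOrth T W) (𝟙 X) :=
  (hasConeIn_lOrth_iff _ _).2 fun V _ =>
    ⟨fun u u' h => by simpa using h, fun v => ⟨v, by simp⟩⟩

section FourLemma

variable {A B : Triangle T} (hA : A ∈ distTriang T) (hB : B ∈ distTriang T) (φ : A ⟶ B) {V : T}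
  (hsurj₁ : Surjective (fun u : B.obj₁⟦(1 : ℤ)⟧ ⟶ V => φ.hom₁⟦(1 : ℤ)⟧' ≫ u))
  (hinj₃ : Injective (fun u : B.obj₃ ⟶ V => φ.hom₃ ≫ u))
include hA hB hsurj₁ hinj₃

lemma injective_hom₂_comp (hinj₁ : Injective (fun u : B.obj₁ ⟶ V => φ.hom₁ ≫ u)) :
    Injective (fun u : B.obj₂ ⟶ V => φ.hom₂ ≫ u) := by
  rw [injective_comp_left_iff] at hinj₁ hinj₃ ⊢
  intro u hu
  have hu₁ : B.mor₁ ≫ u = 0 := hinj₁ _ (by rw [← φ.comm₁_assoc, hu, comp_zero])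
  obtain ⟨w, rfl⟩ := Triangle.yoneda_exact₂ _ hB u hu₁
  obtain ⟨t, ht⟩ := Triangle.yoneda_exact₃ _ hA (φ.hom₃ ≫ w) (by rw [φ.comm₂_assoc, hu])
  obtain ⟨t, rfl⟩ := hsurj₁ t
  have hw : w - B.mor₃ ≫ t = 0 := hinj₃ _ (by
    rw [Preadditive.comp_sub, ht, ← φ.comm₃_assoc, sub_self])
  rw [sub_eq_zero.1 hw, comp_distTriang_mor_zero₂₃_assoc _ hB, zero_comp]

lemma surjective_shift_hom₂_comp
    (hsurj₃ : Surjective (fun u : B.obj₃⟦(1 : ℤ)⟧ ⟶ V => φ.hom₃⟦(1 : ℤ)⟧' ≫ u)) :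
    Surjective (fun u : B.obj₂⟦(1 : ℤ)⟧ ⟶ V => φ.hom₂⟦(1 : ℤ)⟧' ≫ u) := by
  have shift_comm₁ := congrArg (·⟦(1 : ℤ)⟧') φ.comm₁
  have shift_comm₂ := congrArg (·⟦(1 : ℤ)⟧') φ.comm₂
  simp only [Functor.map_comp] at shift_comm₁ shift_comm₂
  intro v
  obtain ⟨s, hs : φ.hom₁⟦(1 : ℤ)⟧' ≫ s = A.mor₁⟦(1 : ℤ)⟧' ≫ v⟩ := hsurj₁ (A.mor₁⟦(1 : ℤ)⟧' ≫ v)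
  have hs₀ : B.mor₃ ≫ s = 0 := (injective_comp_left_iff _ _).1 hinj₃ _ (by
    rw [← φ.comm₃_assoc, hs, comp_distTriang_mor_zero₃₁_assoc _ hA, zero_comp])
  obtain ⟨w, rfl⟩ := exists_eq_shift_mor₁_comp hB s hs₀
  obtain ⟨t, ht⟩ := exists_eq_shift_mor₂_comp hA (v - φ.hom₂⟦(1 : ℤ)⟧' ≫ w) (by
    rw [Preadditive.comp_sub, ← hs, reassoc_of% shift_comm₁, sub_self])
  obtain ⟨t, rfl⟩ := hsurj₃ t
  refine ⟨w + B.mor₂⟦(1 : ℤ)⟧' ≫ t, ?_⟩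
  dsimp only at ht ⊢
  rw [Preadditive.comp_add, ← reassoc_of% shift_comm₂, ← ht, add_sub_cancel]

end FourLemma

lemma hasConeIn_lOrth_hom₂ {A B : Triangle T} (hA : A ∈ distTriang T) (hB : B ∈ distTriang T)
    (φ : A ⟶ B) {W : Set T} (h₁ : HasConeIn (lOrth T W) φ.hom₁)
    (h₃ : HasConeIn (lOrth T W) φ.hom₃) : HasConeIn (lOrth T W) φ.hom₂ := by
  rw [hasConeIn_lOrth_iff] at h₁ h₃ ⊢
  intro V hV
  obtain ⟨hinj₁, hsurj₁⟩ := h₁ V hV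
  obtain ⟨hinj₃, hsurj₃⟩ := h₃ V hV
  exact ⟨injective_hom₂_comp hA hB φ hsurj₁ hinj₃ hinj₁,
    surjective_shift_hom₂_comp hA hB φ hsurj₁ hinj₃ hsurj₃⟩

-- The octahedral axiom is not assumed, so the cone of the new map is only tested against `W`.
lemma exists_factorization_hasConeIn_lOrth {E F D E₁ : T} {φ : E ⟶ F} {g : F ⟶ D}
    {h : D ⟶ E⟦(1 : ℤ)⟧} (hT : Triangle.mk φ g h ∈ distTriang T) {k : E₁ ⟶ D} {W : Set T}
    (hk : HasConeIn (lOrth T W) k) :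
    ∃ E' ∈ starSet T {E} {E₁}, ∃ (e : E ⟶ E') (φ' : E' ⟶ F), e ≫ φ' = φ ∧
      HasConeIn (lOrth T W) φ' := by
  obtain ⟨E', e, q, hT'⟩ := distinguished_cocone_triangle₂ (k ≫ h)
  have comm₃ : (k ≫ h) ≫ (𝟙 E)⟦(1 : ℤ)⟧' = k ≫ h := by simp
  obtain ⟨φ', comm₁, comm₂⟩ : ∃ φ' : E' ⟶ F, e ≫ φ' = 𝟙 E ≫ φ ∧ q ≫ k = φ' ≫ g :=
    complete_distinguished_triangle_morphism₂ _ _ hT' hT (𝟙 E) k comm₃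
  refine ⟨E', ⟨E, E₁, e, q, k ≫ h, hT', rfl, rfl⟩, e, φ', by simpa using comm₁, ?_⟩
  exact hasConeIn_lOrth_hom₂ hT' hT
    (Triangle.homMk _ _ (𝟙 E) φ' k comm₁ comm₂ comm₃) (hasConeIn_lOrth_id W E) hk

lemma extClosure_subset_eventuallyLOrth {U : Set T} {M : ℤ → Set T}
    (hU : U ⊆ eventuallyLOrth M) : {K | extClosure T U K} ⊆ eventuallyLOrth M := by
  intro K hK
  induction hK with
  | of hK => exact hU hK
  | zero hK => exact .of_forall fun i V _ u => hK.eq_of_src u 0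
  | ext f g h hT _ _ hX hZ =>
    filter_upwards [hX, hZ] with i hX hZ V hV u
    obtain ⟨v, rfl⟩ := Triangle.yoneda_exact₂ _ hT u (hX V hV _)
    exact (congrArg (g ≫ ·) (hZ V hV v)).trans comp_zero

section Metric

variable {M : ℤ → Set T}

lemma IsExtGoodMetric.shift_mem (hM : IsExtGoodMetric T M) {m : ℤ} (n : ℤ) {X : T}
    (hX : X ∈ M (m + |n|)) : X⟦n⟧ ∈ M m := by
  induction n using Int.induction_on generalizing m with
  | zero => exact hM.iso_closed _ ((shiftFunctorZero T ℤ).app X).symm (by simpa using hX)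
  | succ k ih =>
    refine hM.iso_closed _ ((shiftFunctorAdd T (k : ℤ) 1).app X).symm
      (hM.shift_one _ ⟨_, ih ?_, ⟨Iso.refl _⟩⟩)
    rwa [Nat.abs_cast, add_right_comm, add_assoc, ← abs_of_nonneg (by positivity : 0 ≤ (k : ℤ) + 1)]
  | pred k ih =>
    refine hM.iso_closed _ ((shiftFunctorAdd T (-k : ℤ) (-1)).app X).symm
      (hM.shift_neg_one _ ⟨_, ih ?_, ⟨Iso.refl _⟩⟩)
    rwa [show m + 1 + |(-k : ℤ)| = m + |(-k : ℤ) - 1| by grind]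

lemma bijective_comp_of_hasConeIn (hM : IsExtGoodMetric T M) {j : ℤ} {E F K : T} {φ : E ⟶ F}
    (hK : K ∈ lOrth T (M j)) (hφ : HasConeIn (M (j + 1)) φ) :
    Bijective (fun z : K ⟶ E => z ≫ φ) := by
  obtain ⟨D, g, h, hT, hD⟩ := hφ
  refine ⟨(injective_comp_right_iff _ _).2 fun z hz => ?_, fun u => ?_⟩
  · obtain ⟨w, rfl⟩ := Triangle.coyoneda_exact₂ _ (inv_rot_of_distTriang _ hT) z hz
    rw [hK _ (hM.shift_neg_one j ⟨D, hD, ⟨Iso.refl _⟩⟩) w]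
    exact zero_comp
  · obtain ⟨z, hz⟩ := Triangle.coyoneda_exact₂ _ hT u (hK D (hM.antitone j hD) _)
    exact ⟨z, hz.symm⟩

lemma eventually_bijective_comp (hM : IsExtGoodMetric T M) {K F : T} (hK : K ∈ eventuallyLOrth M)
    {E : ℕ → T} {φ : ∀ n, E n ⟶ F} {i : ℤ} (hφ : ∀ n : ℕ, HasConeIn (M (i + n + 1)) (φ n)) :
    ∀ᶠ n in atTop, Bijective (fun z : K ⟶ E n => z ≫ φ n) :=
  ((tendsto_atTop_add_const_left atTop i tendsto_natCast_atTop_atTop).eventually hK).mono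
    fun n hn => bijective_comp_of_hasConeIn hM hn (hφ n)

end Metric

instance isClosedUnderIsomorphisms_univ :
    ObjectProperty.IsClosedUnderIsomorphisms (· ∈ (Set.univ : Set T)) where
  of_iso _ _ := trivial

instance isTriangulated_univ : ObjectProperty.IsTriangulated (· ∈ (Set.univ : Set T)) where
  exists_zero := ⟨0, isZero_zero T, trivial⟩
  isStableUnderShiftBy _ := ⟨fun _ _ => trivial⟩
  toIsTriangulatedClosed₂ := .mk' fun _ _ _ _ => trivial

section InterStar

variable {S : Set T} [ObjectProperty.IsTriangulated (· ∈ S)]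
  [ObjectProperty.IsClosedUnderIsomorphisms (· ∈ S)] {M : ℤ → Set T}

lemma mem_iInter_starSet_of_triangle (hM : IsOrthMetric T M) (hS : S ⊆ eventuallyLOrth M)
    {A : Triangle T} (hA : A ∈ distTriang T) (h₁ : A.obj₁ ∈ ⋂ n, starSet T S (M n))
    (h₃ : A.obj₃ ∈ ⋂ n, starSet T S (M n)) : A.obj₂ ∈ ⋂ n, starSet T S (M n) := by
  refine Set.mem_iInter.2 fun n => ?_
  obtain ⟨K₃, R₃, c, _, _, hT₃, hK₃, hR₃⟩ := Set.mem_iInter.1 h₃ n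
  obtain ⟨m, hm, hnm⟩ := ((hS hK₃).and (eventually_ge_atTop n)).exists
  obtain ⟨K₁, R₁, a, a', a'', hT₁, hK₁, hR₁⟩ := Set.mem_iInter.1 h₁ (m + 1)
  -- `K₃` is orthogonal to `ΣR₁`, so its map to `ΣA.obj₁` lifts along `Σa`.
  obtain ⟨k, hk⟩ : ∃ k : K₃ ⟶ K₁⟦(1 : ℤ)⟧, k ≫ a⟦(1 : ℤ)⟧' = c ≫ A.mor₃ := by
    obtain ⟨k, hk⟩ := exists_eq_comp_shift_mor₁ hT₁ (c ≫ A.mor₃)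
      (hm _ (hM.shift_one m ⟨R₁, hR₁, ⟨Iso.refl _⟩⟩) _)
    exact ⟨k, hk.symm⟩
  obtain ⟨K₂, p, q, hK⟩ := distinguished_cocone_triangle₂ k
  obtain ⟨b, comm₁, comm₂⟩ := complete_distinguished_triangle_morphism₂ _ _ hK hA a c hk
  have hMn : M n = lOrth T (rOrth T (M n)) := (hM.orth n).symm
  have hR₁n : R₁ ∈ M n := antitone_int_of_succ_le hM.antitone (by omega) hR₁
  have hb : HasConeIn (M n) b := by
    rw [hMn] at hR₁n hR₃ ⊢
    exact hasConeIn_lOrth_hom₂ hK hA (Triangle.homMk _ _ a b c comm₁ comm₂ hk)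
      ⟨_, _, _, hT₁, hR₁n⟩ ⟨_, _, _, hT₃, hR₃⟩
  obtain ⟨Z, g, h, hT, hZ⟩ := hb
  exact ⟨K₂, Z, b, g, h, hT, ext_of_isTriangulatedClosed₂ (· ∈ S) _ hK hK₁ hK₃, hZ⟩

instance isClosedUnderIsomorphisms_iInter_starSet (S : Set T) (M : ℤ → Set T) :
    ObjectProperty.IsClosedUnderIsomorphisms (· ∈ ⋂ n, starSet T S (M n)) where
  of_iso e hX := Set.mem_iInter.2 fun n =>
    (extensionProduct (· ∈ S) (· ∈ M n)).prop_of_iso e (Set.mem_iInter.1 hX n)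

lemma isTriangulated_iInter_starSet (hM : IsOrthMetric T M) (hS : S ⊆ eventuallyLOrth M) :
    ObjectProperty.IsTriangulated (· ∈ ⋂ n, starSet T S (M n)) where
  exists_zero := ⟨0, isZero_zero T, Set.mem_iInter.2 fun n =>
    ⟨0, 0, _, _, _, contractible_distinguished (0 : T), prop_zero (· ∈ S),
      hM.zero_mem n 0 (isZero_zero T)⟩⟩
  isStableUnderShiftBy a := ⟨fun X hX => Set.mem_iInter.2 fun n => by
    obtain ⟨K, R, f, g, h, hT, hK, hR⟩ := Set.mem_iInter.1 hX (n + |a|)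
    exact ⟨_, _, _, _, _, Triangle.shift_distinguished _ hT a, le_shift _ a K hK,
      hM.shift_mem a hR⟩⟩
  toIsTriangulatedClosed₂ := .mk' fun _ hA => mem_iInter_starSet_of_triangle hM hS hA

end InterStar

lemma exists_hasConeIn_of_approxTriangle {M : ℤ → Set T} (hM : IsOrthMetric T M) {P : Set T}
    [ObjectProperty.IsTriangulated (· ∈ P)] [ObjectProperty.IsClosedUnderIsomorphisms (· ∈ P)]
    {B : Set T} (hB : starSet T B B ⊆ B) {j : ℤ}
    (happrox : ∀ D ∈ M j ∩ P, approxTriangle T D B (M (j + 1) ∩ P)) {F : T} (hF : F ∈ P)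
    (x : Over F) (hx : x.left ∈ B ∧ HasConeIn (M j ∩ P) x.hom) :
    ∃ y : Over F, (y.left ∈ B ∧ HasConeIn (M (j + 1) ∩ P) y.hom) ∧ Nonempty (x ⟶ y) := by
  obtain ⟨hxB, D, g, h, hT, hD⟩ := hx
  obtain ⟨E₁, D₁, k, k', k'', hT₁, hE₁, hD₁⟩ := happrox D hD
  obtain ⟨E, hE, e, φ, he, hφ⟩ := exists_factorization_hasConeIn_lOrth hT
    (W := rOrth T (M (j + 1))) ⟨D₁, k', k'', hT₁, (hM.orth _).symm ▸ hD₁.1⟩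
  rw [hM.orth] at hφ
  obtain ⟨D', g', h', hT', hD'⟩ := hφ
  have hxP : x.left ∈ P := ext_of_isTriangulatedClosed₁ (· ∈ P) _ hT hF hD.2
  have hE₁P : E₁ ∈ P := ext_of_isTriangulatedClosed₁ (· ∈ P) _ hT₁ hD.2 hD₁.2
  obtain ⟨_, _, _, _, _, hT₂, rfl, rfl⟩ := hE
  have hEP : E ∈ P := ext_of_isTriangulatedClosed₂ (· ∈ P) _ hT₂ hxP hE₁P
  have hD'P : D' ∈ P := ext_of_isTriangulatedClosed₃ (· ∈ P) _ hT' hEP hF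
  exact ⟨Over.mk φ, ⟨hB ⟨_, _, _, _, _, hT₂, hxB, hE₁⟩, D', g', h', hT', hD', hD'P⟩,
    ⟨Over.homMk e he⟩⟩

lemma exists_approximating_sequence {M : ℤ → Set T} (hM : IsOrthMetric T M) {P : Set T}
    [ObjectProperty.IsTriangulated (· ∈ P)] [ObjectProperty.IsClosedUnderIsomorphisms (· ∈ P)]
    {B : Set T} (hB : starSet T B B ⊆ B) {i : ℤ}
    (happrox : ∀ j ≥ i, ∀ D ∈ M j ∩ P, approxTriangle T D B (M (j + 1) ∩ P)) {F : T}
    (hF : F ∈ M i ∩ P) :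
    ∃ E : ℕ → Over F, (∀ n, Nonempty (E n ⟶ E (n + 1))) ∧
      ∀ n : ℕ, (E n).left ∈ B ∧ HasConeIn (M (i + n + 1)) (E n).hom := by
  obtain ⟨E₀, D, φ, g, h, hT, hE₀, hD⟩ := happrox i le_rfl F hF
  obtain ⟨E, hE, hr⟩ := exists_seq_of_forall_exists
    (p := fun n (x : Over F) => x.left ∈ B ∧ HasConeIn (M (i + n + 1) ∩ P) x.hom)
    (r := fun x y => Nonempty (x ⟶ y))
    ⟨Over.mk φ, hE₀, D, g, h, hT, by simpa using hD⟩ fun n x hx => by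
      obtain ⟨y, hy, hxy⟩ := exists_hasConeIn_of_approxTriangle hM hB
        (happrox _ (by omega)) hF.2 x hx
      exact ⟨y, by simpa [add_assoc, add_comm, add_left_comm] using hy, hxy⟩
  exact ⟨E, hr, fun n => ⟨(hE n).1, (hE n).2.mono Set.inter_subset_left⟩⟩

end Pretriangulated

lemma injective_comp_shift_map {T : Type*} [Category T] [HasShift T ℤ] {K X Y : T} {f : X ⟶ Y}
    {n : ℤ} (hf : Injective (fun x : K⟦-n⟧ ⟶ X => x ≫ f)) :
    Injective (fun u : K ⟶ X⟦n⟧ => u ≫ f⟦n⟧') := by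
  intro u₁ u₂ hu
  refine (shiftFunctor T (-n)).map_injective ?_
  rw [← cancel_mono (shiftShiftNeg X n).hom]
  refine hf ?_
  have naturality : f⟦n⟧'⟦-n⟧' ≫ (shiftShiftNeg Y n).hom = (shiftShiftNeg X n).hom ≫ f :=
    (shiftFunctorCompIsoId T n (-n) (add_neg_cancel n)).hom.naturality f
  simp only [Category.assoc, ← naturality, ← Functor.map_comp_assoc]
  exact congrArg (fun w => w⟦-n⟧' ≫ (shiftShiftNeg Y n).hom) hu

section FiniteTruncation

variable {T : Type*} [Category T] [Preadditive T] {α : Type*} [DecidableEq α] (f : α → T)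
  [HasCoproduct f]

/-- The endomorphism of `∐ f` that projects onto the finite subcoproduct indexed by `s`. -/
noncomputable def finTrunc (s : Finset α) : ∐ f ⟶ ∐ f := ∑ j ∈ s, Sigma.π f j ≫ Sigma.ι f j

lemma ι_finTrunc (s : Finset α) (j : α) :
    Sigma.ι f j ≫ finTrunc f s = if j ∈ s then Sigma.ι f j else 0 := by
  have hne : ∀ k ≠ j, Sigma.ι f j ≫ Sigma.π f k ≫ Sigma.ι f k = 0 := fun k hk => by
    rw [Sigma.ι_π_of_ne_assoc _ hk.symm, zero_comp]
  rw [finTrunc, Preadditive.comp_sum]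
  split_ifs with hj
  · rw [Finset.sum_eq_single_of_mem j hj fun k _ => hne k, Sigma.ι_π_eq_id_assoc]
  · exact Finset.sum_eq_zero fun k hk => hne k (ne_of_mem_of_not_mem hk hj)

lemma finTrunc_comp_finTrunc {s t : Finset α} (h : s ⊆ t) :
    finTrunc f s ≫ finTrunc f t = finTrunc f s := by
  refine Sigma.hom_ext _ _ fun j => ?_
  by_cases hj : j ∈ s
  · simp only [reassoc_of% ι_finTrunc, if_pos hj, ι_finTrunc, if_pos (h hj)]
  · simp only [reassoc_of% ι_finTrunc, ι_finTrunc, if_neg hj, zero_comp]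

end FiniteTruncation

section Compact

variable {C}

lemma isCompactObj_iff_exists_comp_finTrunc {K : C} : IsCompactObj C K ↔
    ∀ (α : Type v) [DecidableEq α] (f : α → C) (y : K ⟶ ∐ f), ∃ s, y ≫ finTrunc f s = y := by
  classical
  refine ⟨fun hK α _ f y => ?_, fun hK α f y => ?_⟩
  · obtain ⟨s, h, rfl⟩ := hK α f y
    refine ⟨s, ?_⟩
    rw [Category.assoc]
    congr 1
    refine Sigma.hom_ext _ _ fun j => ?_
    simp [ι_finTrunc]
  · obtain ⟨s, hs⟩ := hK α f y
    refine ⟨s, y ≫ Sigma.desc fun j => if h : j ∈ s then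
      Sigma.ι (fun i : {a // a ∈ s} => f i) ⟨j, h⟩ else 0, ?_⟩
    conv_lhs => rw [← hs]
    rw [Category.assoc]
    congr 1
    refine Sigma.hom_ext _ _ fun j => ?_
    by_cases hj : j ∈ s <;> simp [ι_finTrunc, hj]

lemma IsCompactObj.exists_eq_sum {K : C} (hK : IsCompactObj C K) {α : Type v} [DecidableEq α]
    {f : α → C} (y : K ⟶ ∐ f) : ∃ s : Finset α, y = ∑ j ∈ s, (y ≫ Sigma.π f j) ≫ Sigma.ι f j := by
  obtain ⟨s, hs⟩ := isCompactObj_iff_exists_comp_finTrunc.1 hK α f y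
  refine ⟨s, ?_⟩
  conv_lhs => rw [← hs]
  simp only [finTrunc, Preadditive.comp_sum, Category.assoc]

lemma IsCompactObj.eq_zero_of_comp_π_eq_zero {K : C} (hK : IsCompactObj C K) {α : Type v}
    [DecidableEq α] {f : α → C} {y : K ⟶ ∐ f} (hy : ∀ j, y ≫ Sigma.π f j = 0) : y = 0 := by
  obtain ⟨s, hs⟩ := hK.exists_eq_sum y
  rw [hs]
  exact Finset.sum_eq_zero fun j _ => by rw [hy, zero_comp]

lemma IsCompactObj.obj_leftAdjoint {L R : C ⥤ C} (adj : L ⊣ R)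
    (hR : ∀ α : Type v, PreservesColimitsOfShape (Discrete α) R) {K : C} (hK : IsCompactObj C K) :
    IsCompactObj C (L.obj K) := by
  intro α f y
  obtain ⟨s, h, hh⟩ := hK α (fun j => R.obj (f j))
    (adj.homEquiv K _ y ≫ inv (sigmaComparison R f))
  rw [IsIso.comp_inv_eq] at hh
  refine ⟨s, (adj.homEquiv K _).symm (h ≫ sigmaComparison R _), ?_⟩
  rw [← Adjunction.homEquiv_naturality_right_symm, Equiv.eq_symm_apply, hh]
  simp only [Category.assoc]
  congr 1
  refine Sigma.hom_ext _ _ fun j => ?_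
  simp

lemma IsCompactObj.shift {K : C} (hK : IsCompactObj C K) (n : ℤ) : IsCompactObj C (K⟦n⟧) :=
  hK.obj_leftAdjoint (shiftEquiv C n).toAdjunction fun _ => inferInstance

lemma isCompactObj_of_triangle {A : Triangle C} (hA : A ∈ distTriang C)
    (h₁ : IsCompactObj C A.obj₁) (h₃ : IsCompactObj C A.obj₃) : IsCompactObj C A.obj₂ := by
  rw [isCompactObj_iff_exists_comp_finTrunc] at *
  intro α _ f y
  obtain ⟨s, hs⟩ := h₁ α f (A.mor₁ ≫ y)
  obtain ⟨z, hz⟩ := Triangle.yoneda_exact₂ _ hA (y - y ≫ finTrunc f s) (by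
    rw [Preadditive.comp_sub, ← Category.assoc, hs, sub_self])
  obtain ⟨t, ht⟩ := h₃ α f z
  have hy : y ≫ finTrunc f s + A.mor₂ ≫ z = y := by rw [← hz, add_sub_cancel]
  have hzt : z ≫ finTrunc f (s ∪ t) = z := by
    rw [← ht, Category.assoc, finTrunc_comp_finTrunc f Finset.subset_union_right]
  refine ⟨s ∪ t, ?_⟩
  conv_lhs => rw [← hy]
  rw [Preadditive.add_comp, Category.assoc, Category.assoc, hzt,
    finTrunc_comp_finTrunc f Finset.subset_union_left, hy]

instance isClosedUnderIsomorphisms_compacts :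
    ObjectProperty.IsClosedUnderIsomorphisms (· ∈ compacts C) where
  of_iso e hK α f y := by
    obtain ⟨s, h, hh⟩ := hK α f (e.hom ≫ y)
    exact ⟨s, e.inv ≫ h, by rw [Category.assoc, ← hh, e.inv_hom_id_assoc]⟩

instance isTriangulated_compacts : ObjectProperty.IsTriangulated (· ∈ compacts C) where
  exists_zero := ⟨0, isZero_zero C, fun _ _ _ => ⟨∅, 0, (isZero_zero C).eq_of_src _ _⟩⟩
  isStableUnderShiftBy n := ⟨fun _ hK => IsCompactObj.shift hK n⟩
  toIsTriangulatedClosed₂ := .mk' fun _ hA => isCompactObj_of_triangle hA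

lemma IsPreGenSeq.compacts_subset_eventuallyLOrth {G M : ℤ → Set C} (hG : IsPreGenSeq C G)
    (hGM : ∀ n, G n ⊆ eventuallyLOrth M) : compacts C ⊆ eventuallyLOrth M := by
  rw [← hG.generates]
  exact smd_subset_eventuallyLOrth
    (extClosure_subset_eventuallyLOrth (Set.iUnion_subset hGM))

lemma isIso_of_forall_compacts_bijective_comp (hcg : CompactlyGenerated C) {H F : C} {h : H ⟶ F}
    (hh : ∀ K ∈ compacts C, Bijective (fun x : K ⟶ H => x ≫ h)) : IsIso h := by
  obtain ⟨Z, g, k, hT⟩ := distinguished_cocone_triangle h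
  refine (Triangle.isZero₃_iff_isIso₁ _ hT).1 (hcg Z fun K hK f => ?_)
  have shift_inj : Injective (fun u : K ⟶ H⟦(1 : ℤ)⟧ => u ≫ h⟦(1 : ℤ)⟧') :=
    injective_comp_shift_map (hh _ (IsCompactObj.shift hK (-1))).1
  have hfk : f ≫ k = 0 := (injective_comp_right_iff _ _).1 shift_inj _ (by
    rw [Category.assoc]
    exact (congrArg (f ≫ ·) (comp_distTriang_mor_zero₃₁ _ hT)).trans comp_zero)
  obtain ⟨w, rfl⟩ := Triangle.coyoneda_exact₃ _ hT f hfk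
  obtain ⟨z, rfl⟩ := (hh K hK).2 w
  exact (Category.assoc _ _ _).trans
    ((congrArg (z ≫ ·) (comp_distTriang_mor_zero₁₂ _ hT)).trans comp_zero)

end Compact

section Closure

variable {C} {U : Set C} {X : C}

lemma bigClosure.mono {V : Set C} (hUV : U ⊆ V) (hX : bigClosure C U X) : bigClosure C V X := by
  induction hX with
  | of hX => exact .of (hUV hX)
  | zero hX => exact .zero hX
  | coprod f _ e ih => exact .coprod f ih e
  | ext f g h hT _ _ hX hZ => exact .ext f g h hT hX hZ
  | retract i r hir _ hY => exact .retract i r hir hY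

lemma extClosure.bigClosure (hX : extClosure C U X) : bigClosure C U X := by
  induction hX with
  | of hX => exact .of hX
  | zero hX => exact .zero hX
  | ext f g h hT _ _ hX hZ => exact .ext f g h hT hX hZ

lemma bigClosure.shift {V : Set C} {n : ℤ} (hUV : ∀ X ∈ U, GApprox.bigClosure C V (X⟦n⟧))
    (hX : bigClosure C U X) : GApprox.bigClosure C V (X⟦n⟧) := by
  induction hX with
  | of hX => exact hUV _ hX
  | zero hX => exact .zero ((shiftFunctor C n).map_isZero hX)
  | coprod f _ e ih =>
    exact .coprod _ ih ((shiftFunctor C n).mapIso e ≪≫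
      (asIso (sigmaComparison (shiftFunctor C n) f)).symm)
  | ext f g h hT _ _ hX hZ => exact .ext _ _ _ (Triangle.shift_distinguished _ hT n) hX hZ
  | retract i r hir _ hY =>
    exact .retract (i⟦n⟧') (r⟦n⟧')
      (by rw [← Functor.map_comp, hir, CategoryTheory.Functor.map_id]) hY

variable {G : ℤ → Set C} {a b c : ℤ}

lemma gBarInt_subset_gBarIic (hbc : b ≤ c) : gBarInt C G a b ⊆ gBarIic C G c :=
  fun _ hX => bigClosure.mono (Set.biUnion_subset_biUnion_left fun _ hm => hm.2.trans hbc) hX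

lemma gBarIic_mono (hbc : b ≤ c) : gBarIic C G b ⊆ gBarIic C G c :=
  fun _ hX => bigClosure.mono (Set.biUnion_subset_biUnion_left fun _ hm => hm.trans hbc) hX

lemma starSet_gBarIic_subset : starSet C (gBarIic C G b) (gBarIic C G b) ⊆ gBarIic C G b :=
  fun _ ⟨_, _, _, _, _, hT, hX, hZ⟩ => .ext _ _ _ hT hX hZ

lemma IsGenSeq.shift_mem_gBarIic (hG : IsGenSeq C G) (hX : X ∈ gBarIic C G b) :
    X⟦(1 : ℤ)⟧ ∈ gBarIic C G (b + 1) := by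
  refine bigClosure.shift (fun Y hY => ?_) hX
  obtain ⟨m, hm : m ≤ b, hY⟩ := Set.mem_iUnion₂.1 hY
  obtain ⟨Z, hZ, i, r, hir⟩ := hG.shift_cond m (.inr ⟨Y, hY, ⟨Iso.refl _⟩⟩)
  exact .retract i r hir
    (gBarInt_subset_gBarIic (a := m - 1) (b := m + 1) (by omega) (extClosure.bigClosure hZ))

end Closure

section Sequence

variable {T : Type*} [Category.{v} T] [HasCoproducts.{v} T] {E : ℕ → T}

lemma seqCoprod_hom_ext {X : T} {f g : seqCoprod T E ⟶ X}
    (h : ∀ n, seqInj T E n ≫ f = seqInj T E n ≫ g) : f = g :=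
  Sigma.hom_ext _ _ fun n => h n.down

/-- The morphism out of the coproduct of a sequence with the given components. -/
noncomputable def seqDesc {X : T} (f : ∀ n, E n ⟶ X) : seqCoprod T E ⟶ X :=
  Sigma.desc fun n => f n.down

lemma seqInj_seqDesc {X : T} (f : ∀ n, E n ⟶ X) (n : ℕ) : seqInj T E n ≫ seqDesc f = f n :=
  Sigma.ι_desc _ _

variable [Preadditive T]

/-- The projection from the coproduct of a sequence to its `n`-th term, which is zero on all other
terms. -/
noncomputable def seqProj (E : ℕ → T) (n : ℕ) : seqCoprod T E ⟶ E n :=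
  Sigma.π (fun n : ULift.{v} ℕ => E n.down) ⟨n⟩

lemma seqInj_seqProj_self (n : ℕ) : seqInj T E n ≫ seqProj E n = 𝟙 (E n) :=
  Sigma.ι_π_eq_id _ _

lemma seqInj_seqProj_of_ne {m n : ℕ} (h : m ≠ n) : seqInj T E m ≫ seqProj E n = 0 :=
  Sigma.ι_π_of_ne _ fun h' => h (congrArg ULift.down h')

variable (e : ∀ n, E n ⟶ E (n + 1))

lemma seqInj_oneMinusShift (n : ℕ) :
    seqInj T E n ≫ oneMinusShift T E e = seqInj T E n - e n ≫ seqInj T E (n + 1) :=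
  Sigma.ι_desc _ _

lemma oneMinusShift_seqProj_zero : oneMinusShift T E e ≫ seqProj E 0 = seqProj E 0 :=
  seqCoprod_hom_ext fun n => by
    rw [reassoc_of% seqInj_oneMinusShift, Preadditive.sub_comp, Category.assoc,
      seqInj_seqProj_of_ne n.succ_ne_zero, comp_zero, sub_zero]

lemma oneMinusShift_seqProj_succ (k : ℕ) :
    oneMinusShift T E e ≫ seqProj E (k + 1) = seqProj E (k + 1) - seqProj E k ≫ e k := by
  refine seqCoprod_hom_ext fun n => ?_
  rw [reassoc_of% seqInj_oneMinusShift, Preadditive.sub_comp, Preadditive.comp_sub, Category.assoc]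
  congr 1
  obtain rfl | hnk := eq_or_ne n k
  · rw [seqInj_seqProj_self, reassoc_of% seqInj_seqProj_self, Category.comp_id]
  · rw [seqInj_seqProj_of_ne (by omega), reassoc_of% seqInj_seqProj_of_ne hnk, comp_zero, zero_comp]

lemma comp_seqProj_eq_zero {K : T} {y : K ⟶ seqCoprod T E} (hy : y ≫ oneMinusShift T E e = 0)
    (n : ℕ) : y ≫ seqProj E n = 0 := by
  induction n with
  | zero => rw [← oneMinusShift_seqProj_zero e, reassoc_of% hy, zero_comp]
  | succ k ih =>
    have hk := congrArg (y ≫ ·) (oneMinusShift_seqProj_succ e k)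
    simpa only [reassoc_of% hy, zero_comp, Preadditive.comp_sub, reassoc_of% ih, sub_zero,
      eq_comm] using hk

variable {e}

lemma exists_seqInj_comp_eq {H : T} {π : seqCoprod T E ⟶ H} (hπ : oneMinusShift T E e ≫ π = 0)
    {m n : ℕ} (hmn : m ≤ n) : ∃ t : E m ⟶ E n, seqInj T E m ≫ π = t ≫ seqInj T E n ≫ π := by
  induction n, hmn using Nat.le_induction with
  | base => exact ⟨𝟙 _, (Category.id_comp _).symm⟩
  | succ n _ ih =>
    obtain ⟨t, ht⟩ := ih
    have hn : seqInj T E n ≫ π = e n ≫ seqInj T E (n + 1) ≫ π := by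
      rw [← sub_eq_zero, ← Category.assoc (e n), ← Preadditive.sub_comp, ← seqInj_oneMinusShift,
        Category.assoc, hπ, comp_zero]
    exact ⟨t ≫ e n, by rw [ht, hn, Category.assoc]⟩

end Sequence

section Hocolim

variable {C} {E : ℕ → C} {e : ∀ n, E n ⟶ E (n + 1)}

lemma IsCompactObj.injective_comp_oneMinusShift {K : C} (hK : IsCompactObj C K)
    (e : ∀ n, E n ⟶ E (n + 1)) :
    Injective (fun y : K ⟶ seqCoprod C E => y ≫ oneMinusShift C E e) :=
  (injective_comp_right_iff _ _).2 fun _ hy =>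
    hK.eq_zero_of_comp_π_eq_zero fun n => comp_seqProj_eq_zero e hy n.down

namespace IsHocolim

variable {H : C} {π : seqCoprod C E ⟶ H} {δ : H ⟶ (seqCoprod C E)⟦(1 : ℤ)⟧}
  (hH : IsHocolim C E e H π δ)
include hH

lemma exists_comp_eq {K : C} (hK : IsCompactObj C K) (x : K ⟶ H) :
    ∃ y : K ⟶ seqCoprod C E, y ≫ π = x := by
  have shift_inj := injective_comp_shift_map ((hK.shift (-1)).injective_comp_oneMinusShift e)
  have hx : x ≫ δ = 0 := (injective_comp_right_iff _ _).1 shift_inj _ (by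
    rw [Category.assoc]
    exact (congrArg (x ≫ ·) (comp_distTriang_mor_zero₃₁ _ hH)).trans comp_zero)
  obtain ⟨y, hy⟩ := Triangle.coyoneda_exact₃ _ hH x hx
  exact ⟨y, hy.symm⟩

lemma eventually_exists_comp_eq {K : C} (hK : IsCompactObj C K) (x : K ⟶ H) :
    ∀ᶠ n in atTop, ∃ z : K ⟶ E n, z ≫ seqInj C E n ≫ π = x := by
  classical
  obtain ⟨y, rfl⟩ := hH.exists_comp_eq hK x
  obtain ⟨s, hs⟩ := hK.exists_eq_sum y
  filter_upwards [eventually_ge_atTop (s.sup ULift.down)] with n hn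
  have transition : ∀ j ∈ s, ∃ t : E j.down ⟶ E n,
      seqInj C E j.down ≫ π = t ≫ seqInj C E n ≫ π := fun j hj =>
    exists_seqInj_comp_eq (comp_distTriang_mor_zero₁₂ _ hH) ((Finset.le_sup hj).trans hn)
  choose! t ht using transition
  refine ⟨∑ j ∈ s, (y ≫ seqProj E (ULift.down j)) ≫ t j, ?_⟩
  have hy : y = ∑ j ∈ s, (y ≫ seqProj E (ULift.down j)) ≫ seqInj C E (ULift.down j) := hs
  conv_rhs => rw [hy]
  rw [Preadditive.sum_comp, Preadditive.sum_comp]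
  exact Finset.sum_congr rfl fun j hj => by simp only [Category.assoc, ht j hj]

lemma isIso (hcg : CompactlyGenerated C) {F : C} {h : H ⟶ F}
    (hbij : ∀ K ∈ compacts C,
      ∀ᶠ n in atTop, Bijective (fun z : K ⟶ E n => z ≫ seqInj C E n ≫ π ≫ h)) : IsIso h := by
  refine isIso_of_forall_compacts_bijective_comp hcg fun K hK =>
    ⟨(injective_comp_right_iff _ _).2 fun x hx => ?_, fun u => ?_⟩
  · obtain ⟨n, ⟨z, rfl⟩, hn⟩ := ((hH.eventually_exists_comp_eq hK x).and (hbij K hK)).exists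
    have hz : z = 0 := hn.1 (by simpa only [Category.assoc, zero_comp] using hx)
    rw [hz, zero_comp]
  · obtain ⟨n, hn⟩ := (hbij K hK).exists
    obtain ⟨z, rfl⟩ := hn.2 u
    exact ⟨z ≫ seqInj C E n ≫ π, by simp only [Category.assoc]⟩

lemma mem_gBarIic {G : ℤ → Set C} (hG : IsGenSeq C G) {b : ℤ} (hE : ∀ n, E n ∈ gBarIic C G b) :
    H ∈ gBarIic C G (b + 1) := by
  have hcoprod : seqCoprod C E ∈ gBarIic C G b :=
    .coprod (fun n : ULift.{v} ℕ => E n.down) (fun n => hE n.down) (Iso.refl _)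
  exact .ext _ _ _ (rot_of_distTriang _ hH) (gBarIic_mono (by omega) hcoprod)
    (hG.shift_mem_gBarIic hcoprod)

end IsHocolim

lemma exists_isHocolim_desc {F : C} {φ : ∀ n, E n ⟶ F} (hφ : ∀ n, e n ≫ φ (n + 1) = φ n) :
    ∃ (H : C) (π : seqCoprod C E ⟶ H) (δ : H ⟶ (seqCoprod C E)⟦(1 : ℤ)⟧) (h : H ⟶ F),
      IsHocolim C E e H π δ ∧ ∀ n, seqInj C E n ≫ π ≫ h = φ n := by
  obtain ⟨H, π, δ, hH⟩ := distinguished_cocone_triangle (oneMinusShift C E e)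
  have hcomp : oneMinusShift C E e ≫ seqDesc φ = 0 := seqCoprod_hom_ext fun n => by
    rw [reassoc_of% seqInj_oneMinusShift, Preadditive.sub_comp, Category.assoc, seqInj_seqDesc,
      seqInj_seqDesc, hφ, sub_self, comp_zero]
  obtain ⟨h, hh : seqDesc φ = π ≫ h⟩ := Triangle.yoneda_exact₂ _ hH _ hcomp
  exact ⟨H, π, δ, h, hH, fun n => by rw [← hh, seqInj_seqDesc]⟩

end Hocolim

section Approximation

variable {C} {G Rm : ℤ → Set C} {A : ℤ}

lemma IsGPreApprox.subset_eventuallyLOrth (h : IsGPreApprox C G Rm A) (n : ℤ) :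
    G n ⊆ eventuallyLOrth Rm := fun K hK =>
  let ⟨N, hN⟩ := h.cond2 n
  eventually_atTop.2 ⟨N, fun i hi => hN i hi K hK⟩

instance isClosedUnderIsomorphisms_closCompacts :
    ObjectProperty.IsClosedUnderIsomorphisms (· ∈ closCompacts C Rm) :=
  isClosedUnderIsomorphisms_iInter_starSet _ _

lemma IsGPreApprox.isTriangulated_closCompacts (h : IsGPreApprox C G Rm A)
    (hG : IsPreGenSeq C G) : ObjectProperty.IsTriangulated (· ∈ closCompacts C Rm) :=
  isTriangulated_iInter_starSet h.orthMetric
    (hG.compacts_subset_eventuallyLOrth h.subset_eventuallyLOrth)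

lemma IsWeakGApprox.approxTriangle_gBarIic (h : IsWeakGApprox C G Rm A) (i : ℤ) {F : C}
    (hF : F ∈ Rm i) : approxTriangle C F (gBarIic C G (A - i)) (Rm (i + 1)) :=
  approxTriangle_mono (gBarInt_subset_gBarIic le_rfl) subset_rfl (h.approx i F hF)

lemma IsWeakGQuasiApprox.approxTriangle_gBarIic (h : IsWeakGQuasiApprox C G Rm A) (i : ℤ) {F : C}
    (hF : F ∈ Rm i ∩ closCompacts C Rm) :
    approxTriangle C F (gBarIic C G (A - i)) (Rm (i + 1) ∩ closCompacts C Rm) :=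
  approxTriangle_mono (gBarInt_subset_gBarIic le_rfl) subset_rfl (h.approx i F hF)

end Approximation

theorem statement_9_general (G Rm : ℤ → Set C) (A : ℤ) (hcg : CompactlyGenerated C)
    (hG : IsGenSeq C G) (hR : IsOrthMetric C Rm) (hGR : ∀ n, G n ⊆ eventuallyLOrth Rm)
    {P : Set C} [ObjectProperty.IsTriangulated (· ∈ P)]
    [ObjectProperty.IsClosedUnderIsomorphisms (· ∈ P)]
    (happrox : ∀ i : ℤ, ∀ F ∈ Rm i ∩ P,
      approxTriangle C F (gBarIic C G (A - i)) (Rm (i + 1) ∩ P)) :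
    ∀ i : ℤ, ∀ F ∈ Rm i ∩ P, ApproxSeqConcl C G Rm A i F := by
  intro i F hF
  obtain ⟨E, hmap, hE⟩ := exists_approximating_sequence hR starSet_gBarIic_subset
    (B := gBarIic C G (A - i))
    (fun j hij D hD => approxTriangle_mono (gBarIic_mono (by omega)) subset_rfl (happrox j D hD)) hF
  obtain ⟨e⟩ := Classical.nonempty_pi.2 hmap
  have hbij : ∀ K ∈ compacts C,
      ∀ᶠ n in atTop, Bijective (fun z : K ⟶ (E n).left => z ≫ (E n).hom) := fun K hK =>
    eventually_bijective_comp hR.toIsExtGoodMetric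
      (hG.compacts_subset_eventuallyLOrth hGR hK) fun n => (hE n).2
  have hiso : ∀ (H : C) (π : seqCoprod C (fun n => (E n).left) ⟶ H) δ,
      IsHocolim C _ (fun n => (e n).left) H π δ → ∀ h : H ⟶ F,
        (∀ n, seqInj C _ n ≫ π ≫ h = (E n).hom) → IsIso h := fun H π δ hH h hh =>
    hH.isIso hcg (by simpa only [hh] using hbij)
  refine ⟨⟨_, fun n => (e n).left, fun n => (E n).hom, fun n => Over.w (e n), fun n => (hE n).1,
    fun n => (hE n).2, hiso⟩, ?_⟩
  obtain ⟨H, π, δ, h, hH, hh⟩ := exists_isHocolim_desc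
    (E := fun n => (E n).left) (e := fun n => (e n).left) (φ := fun n => (E n).hom)
    fun n => Over.w (e n)
  have := hiso H π δ hH h hh
  exact .retract (inv h) h (IsIso.inv_hom_id h) (hH.mem_gBarIic hG fun n => (hE n).1)

theorem statement_9 (G Rm : ℤ → Set C) (A : ℤ)
    (hcg : CompactlyGenerated C) (hG : IsGenSeq C G) :
    (IsWeakGApprox C G Rm A →
      ∀ i : ℤ, ∀ F ∈ Rm i, ApproxSeqConcl C G Rm A i F) ∧
    (IsWeakGQuasiApprox C G Rm A →
      ∀ i : ℤ, ∀ F ∈ Rm i ∩ closCompacts C Rm, ApproxSeqConcl C G Rm A i F) := by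
  refine ⟨fun h i F hF => ?_, fun h => ?_⟩
  · exact statement_9_general C G Rm A hcg hG h.orthMetric h.subset_eventuallyLOrth (P := Set.univ)
      (by simpa using h.approxTriangle_gBarIic) i F ⟨hF, trivial⟩
  · have := h.isTriangulated_closCompacts hG.toIsPreGenSeq
    exact statement_9_general C G Rm A hcg hG h.orthMetric h.subset_eventuallyLOrth
      fun j D => h.approxTriangle_gBarIic j

end GApprox
end

section
/- Let T be a weakly G-approximable triangulated category (i.e. (T, R, A) is weakly G-approximable for some orthogonal metric R and integer A > 0), and let R′ be any orthogonal metric on T that is ℕ-equivalent to R^G. Then there exists an integer A′ > 0 such that (T, R′, A′) is weakly G-approximable. If T is moreover G-approximable, then A′ can be chosen so that (T, R′, A′) is G-approximable. -/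
namespace GApprox

open CategoryTheory CategoryTheory.Limits CategoryTheory.Pretriangulated

universe w v u

variable (C : Type u) [Category.{v} C] [HasZeroObject C] [HasShift C ℤ]
  [Preadditive C] [∀ n : ℤ, (shiftFunctor C n).Additive] [Pretriangulated C]
  [HasCoproducts.{v} C]

/-! Given `F ∈ R_i` and a map from `F` to an object of `(M^G_j)^⊥` with `j` sufficiently below
`i`, weak approximability factors the map through a sequence `F ⟶ E 0 ⟶ E 1 ⟶ ⋯` with
`E k ∈ R_(i + k)`. The compact generators eventually see nothing of this sequence, so its homotopy
colimit vanishes and the map is zero. Hence `R_i ⊆ R^G_j`, so any approximating metric is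
`ℕ`-equivalent to `R^G`, and therefore to `R'`. If `R` and `R'` differ by `N`, splicing
`2 * N + 1` consecutive approximation triangles for `R` gives one for `R'`.

Splicing needs associativity of `⋆`, while `C` is only assumed pretriangulated. The inclusion
`A ⋆ (B ⋆ L) ⊆ (A ⋆ B) ⋆ L` still holds for a left orthogonal `L`, by the four lemma, and the
lengths of the spliced approximations add up by the converse of the ghost lemma.
-/

section Retracts

variable {C : Type u} [Category.{v} C]

theorem smd_mono {A B : Set C} (h : A ⊆ B) : smd C A ⊆ smd C B := by
  rintro X ⟨Y, hY, i, r, hir⟩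
  exact ⟨Y, h hY, i, r, hir⟩

theorem subset_smd (A : Set C) : A ⊆ smd C A :=
  fun X hX => ⟨X, hX, 𝟙 X, 𝟙 X, Category.id_comp _⟩

end Retracts

section Orthogonal

variable {C : Type u} [Category.{v} C] [Preadditive C]

theorem rOrth_anti {A B : Set C} (h : A ⊆ B) : rOrth C B ⊆ rOrth C A :=
  fun _ hX a ha => hX a (h ha)

theorem lOrth_anti {A B : Set C} (h : A ⊆ B) : lOrth C B ⊆ lOrth C A :=
  fun _ hX a ha => hX a (h ha)

theorem eq_zero_of_retract {X Y t : C} {i : X ⟶ Y} {r : Y ⟶ X} (hir : i ≫ r = 𝟙 X)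
    (hY : ∀ u : Y ⟶ t, u = 0) (u : X ⟶ t) : u = 0 := by
  rw [← Category.id_comp u, ← hir, Category.assoc, hY (r ≫ u), comp_zero]

end Orthogonal

section StarAssociativity

variable {C : Type u} [Category.{v} C] [HasZeroObject C] [HasShift C ℤ] [Preadditive C]
  [∀ n : ℤ, (shiftFunctor C n).Additive] [Pretriangulated C]

theorem starSet_mono {A A' B B' : Set C} (hA : A ⊆ A') (hB : B ⊆ B') :
    starSet C A B ⊆ starSet C A' B' := by
  rintro Y ⟨X, Z, f, g, h, hT, hX, hZ⟩
  exact ⟨X, Z, f, g, h, hT, hA hX, hB hZ⟩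

open ZeroObject in
theorem subset_starSet_of_zero_mem {A : Set C} (hA : (0 : C) ∈ A) (B : Set C) :
    B ⊆ starSet C A B :=
  fun X hX => ⟨0, X, 0, 𝟙 X, 0, contractible_distinguished₁ X, hA, hX⟩

/- Without the octahedral axiom, the cone of `m` need not be the cone of `q`; the weak pullback
property and the four lemma below are what remains of that statement. -/
theorem exists_homotopyPullback {X Y Z W : C} {f : X ⟶ Y} {g : Y ⟶ Z} {h : Z ⟶ X⟦(1 : ℤ)⟧}
    (hT : Triangle.mk f g h ∈ distTriang C) (q : W ⟶ Z) :
    ∃ (V : C) (j : X ⟶ V) (p : V ⟶ W) (m : V ⟶ Y),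
      Triangle.mk j p (q ≫ h) ∈ distTriang C ∧ j ≫ m = f ∧ p ≫ q = m ≫ g ∧
      ∀ (K : C) (u : K ⟶ Y) (l : K ⟶ W), u ≫ g = l ≫ q → ∃ k : K ⟶ V, k ≫ m = u ∧ k ≫ p = l := by
  obtain ⟨V, j, p, hV⟩ := distinguished_cocone_triangle₂ (q ≫ h)
  obtain ⟨m, hjm, hpq⟩ : ∃ m : V ⟶ Y, j ≫ m = 𝟙 X ≫ f ∧ p ≫ q = m ≫ g :=
    complete_distinguished_triangle_morphism₂ _ _ hV hT (𝟙 X) q (by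
      change (q ≫ h) ≫ (shiftFunctor C (1 : ℤ)).map (𝟙 X) = q ≫ h
      rw [CategoryTheory.Functor.map_id, Category.comp_id])
  rw [Category.id_comp] at hjm
  have hgh : g ≫ h = 0 := comp_distTriang_mor_zero₂₃ _ hT
  have hjp : j ≫ p = 0 := comp_distTriang_mor_zero₁₂ _ hV
  refine ⟨V, j, p, m, hV, hjm, hpq, fun K u l hul => ?_⟩
  obtain ⟨l', hl'⟩ : ∃ l' : K ⟶ V, l = l' ≫ p := Triangle.coyoneda_exact₃ _ hV l (by
    change l ≫ q ≫ h = 0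
    rw [← Category.assoc, ← hul, Category.assoc, hgh, comp_zero])
  obtain ⟨x, hx⟩ : ∃ x : K ⟶ X, u - l' ≫ m = x ≫ f := Triangle.coyoneda_exact₂ _ hT _ (by
    change (u - l' ≫ m) ≫ g = 0
    rw [Preadditive.sub_comp, hul, hl', Category.assoc, Category.assoc, hpq, sub_self])
  exact ⟨l' + x ≫ j, by rw [Preadditive.add_comp, Category.assoc, hjm, ← hx, add_sub_cancel],
    by rw [Preadditive.add_comp, Category.assoc, hjp, comp_zero, add_zero, hl']⟩

section FourLemma

variable {T : Triangle C} {t : C}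

theorem exists_eq_map_mor₁_comp (hT : T ∈ distTriang C) (u : T.obj₁⟦(1 : ℤ)⟧ ⟶ t)
    (hu : T.mor₃ ≫ u = 0) : ∃ v : T.obj₂⟦(1 : ℤ)⟧ ⟶ t, u = T.mor₁⟦(1 : ℤ)⟧' ≫ v := by
  obtain ⟨v, hv⟩ := Triangle.yoneda_exact₃ _ (rot_of_distTriang _ hT) u hu
  exact ⟨-v, hv.trans ((Preadditive.neg_comp _ _).trans (Preadditive.comp_neg _ _).symm)⟩

theorem exists_eq_map_mor₂_comp (hT : T ∈ distTriang C) (u : T.obj₂⟦(1 : ℤ)⟧ ⟶ t)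
    (hu : T.mor₁⟦(1 : ℤ)⟧' ≫ u = 0) : ∃ v : T.obj₃⟦(1 : ℤ)⟧ ⟶ t, u = T.mor₂⟦(1 : ℤ)⟧' ≫ v :=
  exists_eq_map_mor₁_comp (rot_of_distTriang _ hT) u
    ((Preadditive.neg_comp _ _).trans (neg_eq_zero.2 hu))

theorem mem_lOrth_obj₃_iff (hT : T ∈ distTriang C) {S : Set C} :
    T.obj₃ ∈ lOrth C S ↔ ∀ t ∈ S, (∀ w : T.obj₂ ⟶ t, T.mor₁ ≫ w = 0 → w = 0) ∧
      ∀ w : T.obj₁⟦(1 : ℤ)⟧ ⟶ t, ∃ v : T.obj₂⟦(1 : ℤ)⟧ ⟶ t, w = T.mor₁⟦(1 : ℤ)⟧' ≫ v := by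
  refine ⟨fun h t ht => ⟨fun w hw => ?_, fun w => ?_⟩, fun h t ht u => ?_⟩
  · obtain ⟨v, rfl⟩ := Triangle.yoneda_exact₂ _ hT w hw
    rw [h t ht v, comp_zero]
  · exact exists_eq_map_mor₁_comp hT w (h t ht _)
  · obtain ⟨w, rfl⟩ := Triangle.yoneda_exact₃ _ hT u
      ((h t ht).1 _ (by rw [← Category.assoc, comp_distTriang_mor_zero₁₂ _ hT, zero_comp]))
    obtain ⟨v, rfl⟩ := (h t ht).2 w
    rw [← Category.assoc, comp_distTriang_mor_zero₃₁ _ hT, zero_comp]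

variable {T₁ T₂ : Triangle C} (φ : T₁ ⟶ T₂) [IsIso φ.hom₁]

theorem eq_zero_of_hom₂_comp_eq_zero (hT₁ : T₁ ∈ distTriang C) (hT₂ : T₂ ∈ distTriang C)
    (hinj : ∀ w : T₂.obj₃ ⟶ t, φ.hom₃ ≫ w = 0 → w = 0) (w : T₂.obj₂ ⟶ t)
    (hw : φ.hom₂ ≫ w = 0) : w = 0 := by
  obtain ⟨v, rfl⟩ := Triangle.yoneda_exact₂ _ hT₂ w (by
    rw [← cancel_epi φ.hom₁, ← Category.assoc, ← φ.comm₁, Category.assoc, hw, comp_zero, comp_zero])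
  obtain ⟨s, hs⟩ := Triangle.yoneda_exact₃ _ hT₁ (φ.hom₃ ≫ v) (by
    rw [← Category.assoc, φ.comm₂, Category.assoc, hw])
  have hv : v = T₂.mor₃ ≫ (inv φ.hom₁)⟦(1 : ℤ)⟧' ≫ s := by
    rw [← sub_eq_zero]
    refine hinj _ ?_
    rw [Preadditive.comp_sub, hs, ← Category.assoc, ← φ.comm₃, Category.assoc, ← Category.assoc,
      ← Category.assoc, Category.assoc T₁.mor₃, ← Functor.map_comp, IsIso.hom_inv_id,
      CategoryTheory.Functor.map_id, Category.comp_id, sub_self]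
  rw [hv, ← Category.assoc, comp_distTriang_mor_zero₂₃ _ hT₂, zero_comp]

theorem exists_eq_map_hom₂_comp (hT₁ : T₁ ∈ distTriang C) (hT₂ : T₂ ∈ distTriang C)
    (hinj : ∀ w : T₂.obj₃ ⟶ t, φ.hom₃ ≫ w = 0 → w = 0)
    (hsurj : ∀ w : T₁.obj₃⟦(1 : ℤ)⟧ ⟶ t, ∃ v : T₂.obj₃⟦(1 : ℤ)⟧ ⟶ t, w = φ.hom₃⟦(1 : ℤ)⟧' ≫ v)
    (w : T₁.obj₂⟦(1 : ℤ)⟧ ⟶ t) : ∃ v : T₂.obj₂⟦(1 : ℤ)⟧ ⟶ t, w = φ.hom₂⟦(1 : ℤ)⟧' ≫ v := by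
  have hinv : φ.hom₁⟦(1 : ℤ)⟧' ≫ (inv φ.hom₁)⟦(1 : ℤ)⟧' = 𝟙 _ := by
    rw [← Functor.map_comp, IsIso.hom_inv_id, CategoryTheory.Functor.map_id]
  obtain ⟨v, hv⟩ := exists_eq_map_mor₁_comp hT₂
    ((inv φ.hom₁)⟦(1 : ℤ)⟧' ≫ T₁.mor₁⟦(1 : ℤ)⟧' ≫ w) (by
      refine hinj _ ?_
      rw [← Category.assoc, ← φ.comm₃, Category.assoc, reassoc_of% hinv, ← Category.assoc,
        comp_distTriang_mor_zero₃₁ _ hT₁, zero_comp])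
  obtain ⟨r, hr⟩ := exists_eq_map_mor₂_comp hT₁ (w - φ.hom₂⟦(1 : ℤ)⟧' ≫ v) (by
    rw [Preadditive.comp_sub, ← Category.assoc _ _ v, ← Functor.map_comp, φ.comm₁,
      Functor.map_comp, Category.assoc, ← hv, reassoc_of% hinv, sub_self])
  obtain ⟨q, rfl⟩ := hsurj r
  refine ⟨v + T₂.mor₂⟦(1 : ℤ)⟧' ≫ q, ?_⟩
  rw [Preadditive.comp_add, ← Category.assoc _ _ q, ← Functor.map_comp, ← φ.comm₂,
    Functor.map_comp, Category.assoc, ← hr, add_sub_cancel]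

end FourLemma

theorem starSet_starSet_lOrth_subset (A B S : Set C) :
    starSet C A (starSet C B (lOrth C S)) ⊆ starSet C (starSet C A B) (lOrth C S) := by
  rintro F ⟨E₁, D₁, a, b, c, h₁, hE₁, E₂, D₂, a', b', c', h₂, hE₂, hD₂⟩
  obtain ⟨E, x, y, f, hE, hxf, hyf, -⟩ := exists_homotopyPullback h₁ a'
  obtain ⟨D, g, h, hD⟩ := distinguished_cocone_triangle f
  let φ : Triangle.mk x y (a' ≫ c) ⟶ Triangle.mk a b c :=
    { hom₁ := 𝟙 E₁
      hom₂ := f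
      hom₃ := a'
      comm₁ := hxf.trans (Category.id_comp a).symm
      comm₂ := hyf
      comm₃ := by
        change (a' ≫ c) ≫ (shiftFunctor C (1 : ℤ)).map (𝟙 E₁) = a' ≫ c
        rw [CategoryTheory.Functor.map_id, Category.comp_id] }
  have : IsIso φ.hom₁ := inferInstanceAs (IsIso (𝟙 E₁))
  refine ⟨E, D, f, g, h, hD, ⟨E₁, E₂, x, y, a' ≫ c, hE, hE₁, hE₂⟩,
    (mem_lOrth_obj₃_iff hD).2 fun t ht => ?_⟩
  obtain ⟨hinj, hsurj⟩ := (mem_lOrth_obj₃_iff h₂).1 hD₂ t ht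
  exact ⟨eq_zero_of_hom₂_comp_eq_zero φ hE h₁ hinj, exists_eq_map_hom₂_comp φ hE h₁ hinj hsurj⟩

open ZeroObject in
theorem subset_starSet_of_forall_subset_starSet {L A B : ℕ → Set C}
    (hL : ∀ k, lOrth C (rOrth C (L k)) = L k) (hA0 : (0 : C) ∈ A 0)
    (hAB : ∀ k, starSet C (A k) (B k) ⊆ A (k + 1))
    (hBL : ∀ k, L k ⊆ starSet C (B k) (L (k + 1))) (m : ℕ) : L 0 ⊆ starSet C (A m) (L m) := by
  induction m with
  | zero => exact subset_starSet_of_zero_mem hA0 _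
  | succ m ih =>
    calc L 0 ⊆ starSet C (A m) (L m) := ih
      _ ⊆ starSet C (A m) (starSet C (B m) (L (m + 1))) := starSet_mono subset_rfl (hBL m)
      _ ⊆ starSet C (starSet C (A m) (B m)) (L (m + 1)) := by
        rw [← hL (m + 1)]
        exact starSet_starSet_lOrth_subset _ _ _
      _ ⊆ starSet C (A (m + 1)) (L (m + 1)) := starSet_mono (hAB m) subset_rfl

end StarAssociativity

section Towers

variable {C : Type u} [Category.{v} C] [HasZeroObject C] [HasShift C ℤ] [Preadditive C]
  [∀ n : ℤ, (shiftFunctor C n).Additive] [Pretriangulated C]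

/-- `Tower P k g` says that `g` is a composite of `k` morphisms, each of which has a fibre in `P`
(the fibre of `c` is the first object of a distinguished triangle `X ⟶ F ⟶ F₁ ⟶ ΣX` over `c`).
Towers replace iterated star products, whose associativity would need the octahedral axiom. -/
inductive Tower (P : Set C) : ℕ → ∀ {F F' : C}, (F ⟶ F') → Prop
  | id (F : C) : Tower P 0 (𝟙 F)
  | cons {k : ℕ} {X F F₁ F' : C} (a : X ⟶ F) (c : F ⟶ F₁) (d : F₁ ⟶ X⟦(1 : ℤ)⟧) (g : F₁ ⟶ F') :
      Triangle.mk a c d ∈ distTriang C → X ∈ P → Tower P k g → Tower P (k + 1) (c ≫ g)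

theorem Tower.comp {P : Set C} {k l : ℕ} {F F' F'' : C} {g : F ⟶ F'} {g' : F' ⟶ F''}
    (h : Tower P k g) (h' : Tower P l g') : Tower P (k + l) (g ≫ g') := by
  induction h with
  | id F => rwa [Category.id_comp, Nat.zero_add]
  | cons a c d g hT hX _ ih =>
    rw [Category.assoc, Nat.add_right_comm]
    exact .cons a c d _ hT hX (ih h')

/-- Every morphism out of `E` is annihilated by a tower of length `k`, as in the converse of the
ghost lemma. -/
def KilledByTower (P : Set C) (k : ℕ) (E : C) : Prop :=
  ∀ (F : C) (f : E ⟶ F), ∃ (F' : C) (g : F ⟶ F'), Tower P k g ∧ f ≫ g = 0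

theorem KilledByTower.of_isZero {P : Set C} {E : C} (hE : IsZero E) : KilledByTower P 0 E :=
  fun F _ => ⟨F, 𝟙 F, .id F, hE.eq_of_src _ _⟩

theorem KilledByTower.of_mem {P : Set C} {E : C} (hE : E ∈ P) : KilledByTower P 1 E := by
  intro F f
  obtain ⟨F₁, c, d, hT⟩ := distinguished_cocone_triangle f
  exact ⟨F₁, c ≫ 𝟙 F₁, .cons f c d _ hT hE (.id F₁), by
    rw [Category.comp_id]
    exact comp_distTriang_mor_zero₁₂ _ hT⟩

theorem KilledByTower.of_retract {P : Set C} {k : ℕ} {E E' : C} (h : KilledByTower P k E')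
    {i : E ⟶ E'} {r : E' ⟶ E} (hir : i ≫ r = 𝟙 E) : KilledByTower P k E := by
  intro F f
  obtain ⟨F', g, hg, hfg⟩ := h F (r ≫ f)
  refine ⟨F', g, hg, ?_⟩
  rw [← Category.id_comp f, ← hir, Category.assoc, Category.assoc, ← Category.assoc r, hfg,
    comp_zero]

theorem KilledByTower.ext {P : Set C} {k l : ℕ} {X Y Z : C} {f : X ⟶ Y} {g : Y ⟶ Z}
    {h : Z ⟶ X⟦(1 : ℤ)⟧} (hT : Triangle.mk f g h ∈ distTriang C)
    (hX : KilledByTower P k X) (hZ : KilledByTower P l Z) : KilledByTower P (k + l) Y := by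
  intro F u
  obtain ⟨F', p, hp, hup⟩ := hX F (f ≫ u)
  rw [Category.assoc] at hup
  obtain ⟨v, hv⟩ : ∃ v : Z ⟶ F', u ≫ p = g ≫ v := Triangle.yoneda_exact₂ _ hT (u ≫ p) hup
  obtain ⟨F'', q, hq, hvq⟩ := hZ F' v
  refine ⟨F'', p ≫ q, hp.comp hq, ?_⟩
  rw [← Category.assoc, hv, Category.assoc, hvq, comp_zero]

variable [HasCoproducts.{v} C]

theorem killedByTower_of_mem_coprodPowBig {U : Set C} {k : ℕ} {E : C}
    (hE : E ∈ coprodPowBig C U k) : KilledByTower (bigAddClosure C U) k E := by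
  induction k generalizing E with
  | zero => exact .of_isZero hE
  | succ k ih =>
    obtain ⟨X, Z, f, g, h, hT, hX, hZ⟩ := hE
    rw [Nat.add_comm]
    exact .ext hT (.of_mem hX) (ih hZ)

theorem Tower.exists_weakKernel {U : Set C} {k : ℕ} {F F' : C} {g : F ⟶ F'}
    (hg : Tower (bigAddClosure C U) k g) :
    ∃ Q ∈ coprodPowBig C U k, ∃ q : Q ⟶ F, ∀ (K : C) (h : K ⟶ F), h ≫ g = 0 →
      ∃ l : K ⟶ Q, l ≫ q = h := by
  induction hg with
  | id F =>
    obtain ⟨O, hO⟩ := HasZeroObject.zero (C := C)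
    refine ⟨O, hO, 0, fun K h hh => ⟨0, ?_⟩⟩
    rw [comp_zero, ← hh, Category.comp_id]
  | cons a c d g hT hX _ ih =>
    obtain ⟨Q, hQ, q, hq⟩ := ih
    obtain ⟨Q', j, p, m, hT', -, -, hlift⟩ := exists_homotopyPullback hT q
    refine ⟨Q', ⟨_, Q, j, p, q ≫ d, hT', hX, hQ⟩, m, fun K h hh => ?_⟩
    obtain ⟨l, hl⟩ := hq K (h ≫ c) (by rwa [Category.assoc])
    obtain ⟨l', hl', -⟩ := hlift K h l hl.symm
    exact ⟨l', hl'⟩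

theorem mem_smd_coprodPowBig_iff {U : Set C} {k : ℕ} {E : C} :
    E ∈ smd C (coprodPowBig C U k) ↔ KilledByTower (bigAddClosure C U) k E := by
  constructor
  · rintro ⟨Y, hY, i, r, hir⟩
    exact (killedByTower_of_mem_coprodPowBig hY).of_retract hir
  · intro h
    obtain ⟨F', g, hg, hEg⟩ := h E (𝟙 E)
    obtain ⟨Q, hQ, q, hq⟩ := hg.exists_weakKernel
    obtain ⟨l, hl⟩ := hq E (𝟙 E) hEg
    exact ⟨Q, hQ, l, q, hl⟩

theorem starSet_smd_coprodPowBig_subset (U : Set C) (k l : ℕ) :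
    starSet C (smd C (coprodPowBig C U k)) (smd C (coprodPowBig C U l)) ⊆
      smd C (coprodPowBig C U (k + l)) := by
  rintro Y ⟨X, Z, f, g, h, hT, hX, hZ⟩
  rw [mem_smd_coprodPowBig_iff] at *
  exact hX.ext hT hZ

end Towers

section Closures

theorem bigAddClosure_mono {C : Type u} [Category.{v} C] [HasCoproducts.{v} C] {U V : Set C}
    (h : U ⊆ V) : bigAddClosure C U ⊆ bigAddClosure C V := by
  rintro X ⟨α, f, hf, e⟩
  exact ⟨α, f, fun i => h (hf i), e⟩

variable {C}

open ZeroObject in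
theorem zero_mem_bigAddClosure (U : Set C) : (0 : C) ∈ bigAddClosure C U := by
  have hzero : IsZero (∐ fun i : PEmpty.{v + 1} => (i.elim : C)) := by
    rw [IsZero.iff_id_eq_zero]
    exact Sigma.hom_ext _ _ fun i => i.elim
  exact ⟨PEmpty, _, fun i => i.elim, ⟨(isZero_zero C).iso hzero⟩⟩

theorem coprodPowBig_mono_left {U V : Set C} (h : U ⊆ V) (k : ℕ) :
    coprodPowBig C U k ⊆ coprodPowBig C V k := by
  induction k with
  | zero => exact subset_rfl
  | succ k ih => exact starSet_mono (bigAddClosure_mono h) ih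

theorem monotone_coprodPowBig (U : Set C) : Monotone (coprodPowBig C U) :=
  monotone_nat_of_le_succ fun _ => subset_starSet_of_zero_mem (zero_mem_bigAddClosure U) _

theorem bigClosure_mono {U V : Set C} (h : U ⊆ V) :
    {X | bigClosure C U X} ⊆ {X | bigClosure C V X} := by
  intro X hX
  induction hX with
  | of hX => exact .of (h hX)
  | zero hX => exact .zero hX
  | coprod f _ e ih => exact .coprod f ih e
  | ext f g k hT _ _ hX hZ => exact .ext f g k hT hX hZ
  | retract i r hir _ hY => exact .retract i r hir hY

theorem smd_extClosure_subset_bigClosure (U : Set C) :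
    smd C {X | extClosure C U X} ⊆ {X | bigClosure C U X} := by
  rintro X ⟨Y, hY, i, r, hir⟩
  suffices bigClosure C U Y from .retract i r hir this
  clear i r hir
  induction hY with
  | of hX => exact .of hX
  | zero hX => exact .zero hX
  | ext f g k hT _ _ hX hZ => exact .ext f g k hT hX hZ

theorem rOrth_bigClosure (U : Set C) : rOrth C {X | bigClosure C U X} = rOrth C U := by
  refine subset_antisymm (rOrth_anti fun _ => .of) fun t ht X hX => ?_
  induction hX with
  | of hX => exact ht _ hX
  | zero hX => exact fun u => hX.eq_of_src _ _
  | coprod f _ e ih =>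
    intro u
    rw [← cancel_epi e.inv, comp_zero]
    exact Sigma.hom_ext _ _ fun b => by rw [ih b (Sigma.ι f b ≫ e.inv ≫ u), comp_zero]
  | ext f g h hT _ _ hX hZ =>
    intro u
    obtain ⟨v, rfl⟩ := Triangle.yoneda_exact₂ _ hT u (hX _)
    exact (congrArg (g ≫ ·) (hZ v)).trans comp_zero
  | retract i r hir _ ih => exact eq_zero_of_retract hir ih

end Closures

section LocallyNilpotent

variable {R M : Type*} [Ring R] [AddCommGroup M] [Module R M] {s : R} {m : M}

theorem eq_zero_of_one_sub_smul_eq_zero (hs : ∃ n : ℕ, s ^ n • m = 0) (hm : (1 - s) • m = 0) :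
    m = 0 := by
  obtain ⟨n, hn⟩ := hs
  calc m = (1 - s ^ n) • m := by rw [sub_smul, one_smul, hn, sub_zero]
    _ = 0 := by rw [← geom_sum_mul_neg, mul_smul, hm, smul_zero]

theorem exists_one_sub_smul_eq (hs : ∃ n : ℕ, s ^ n • m = 0) : ∃ m' : M, (1 - s) • m' = m := by
  obtain ⟨n, hn⟩ := hs
  refine ⟨(∑ i ∈ Finset.range n, s ^ i) • m, ?_⟩
  rw [← mul_smul, mul_neg_geom_sum, sub_smul, one_smul, hn, sub_zero]

theorem exists_pow_smul_add_eq_zero {m' : M} (hm : ∃ n : ℕ, s ^ n • m = 0)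
    (hm' : ∃ n : ℕ, s ^ n • m' = 0) : ∃ n : ℕ, s ^ n • (m + m') = 0 := by
  obtain ⟨k, hk⟩ := hm
  obtain ⟨l, hl⟩ := hm'
  refine ⟨k + l, ?_⟩
  rw [smul_add, pow_add, mul_smul, mul_smul, hl, smul_zero, add_zero, ← mul_smul,
    (Commute.pow_pow_self s k l).eq, mul_smul, hk, smul_zero]

end LocallyNilpotent

section SequenceCoproducts

variable {C : Type u} [Category.{v} C] [HasCoproducts.{v} C] {E : ℕ → C}
  (e : ∀ n, E n ⟶ E (n + 1))

/-- The map `⨁ E k ⟶ ⨁ E k` sending `E k` to `E (k + 1)`, which `oneMinusShift` subtracts from the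
identity. -/
noncomputable def seqShift : seqCoprod C E ⟶ seqCoprod C E :=
  Sigma.desc fun n => e n.down ≫ seqInj C E (n.down + 1)

theorem seqInj_comp_seqShift (k : ℕ) :
    seqInj C E k ≫ seqShift e = e k ≫ seqInj C E (k + 1) :=
  Sigma.ι_desc _ _

variable [Preadditive C]

theorem seqInj_comp_oneMinusShift (k : ℕ) :
    seqInj C E k ≫ oneMinusShift C E e = seqInj C E k - e k ≫ seqInj C E (k + 1) :=
  Sigma.ι_desc _ _

theorem oneMinusShift_eq : oneMinusShift C E e = 𝟙 _ - seqShift e :=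
  Sigma.hom_ext _ _ fun k => by
    change seqInj C E k.down ≫ _ = seqInj C E k.down ≫ _
    rw [seqInj_comp_oneMinusShift, Preadditive.comp_sub, Category.comp_id, seqInj_comp_seqShift]

end SequenceCoproducts

section HomotopyColimits

theorem sum_sigma_π_comp_ι {C : Type u} [Category.{v} C] [Preadditive C] {J : Type v} [Fintype J]
    [DecidableEq J] (f : J → C) [HasCoproduct f] :
    ∑ j, Sigma.π f j ≫ Sigma.ι f j = 𝟙 (∐ f) := by
  refine Sigma.hom_ext _ _ fun b => ?_
  rw [Preadditive.comp_sum, Finset.sum_eq_single b, Sigma.ι_π_eq_id_assoc, Category.comp_id]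
  · intro c _ hc
    rw [← Category.assoc, Sigma.ι_π_of_ne _ hc.symm, zero_comp]
  · exact fun hb => absurd (Finset.mem_univ b) hb

variable {C}

namespace IsCompactObj

variable {K : C}

theorem hom_coproduct_induction (hK : IsCompactObj C K) (F : C ⥤ C)
    {α : Type v} {f : α → C} [PreservesColimit (Discrete.functor f) F]
    {P : (K ⟶ F.obj (∐ f)) → Prop} (zero : P 0) (add : ∀ g g', P g → P g' → P (g + g'))
    (ι : ∀ (i : α) (a : K ⟶ F.obj (f i)), P (a ≫ F.map (Sigma.ι f i))) (g : K ⟶ F.obj (∐ f)) :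
    P g := by
  classical
  obtain ⟨s, h, hg⟩ := hK α (fun i => F.obj (f i)) (g ≫ (PreservesCoproduct.iso F f).hom)
  have hsum : g = ∑ i : {i // i ∈ s}, (h ≫ Sigma.π _ i) ≫ F.map (Sigma.ι f i.1) := by
    rw [← Category.comp_id h, ← sum_sigma_π_comp_ι, ← Iso.eq_comp_inv,
      PreservesCoproduct.inv_hom] at hg
    simpa only [Preadditive.comp_sum, Preadditive.sum_comp, Category.assoc, Sigma.ι_desc_assoc,
      ι_comp_sigmaComparison] using hg
  rw [hsum]
  exact Finset.sum_induction _ P add zero fun i _ => ι i.1 _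

theorem exists_seqShift_pow_smul_eq_zero (hK : IsCompactObj C K) {E : ℕ → C}
    (e : ∀ n, E n ⟶ E (n + 1)) (F : C ⥤ C)
    [PreservesColimit (Discrete.functor fun n : ULift.{v} ℕ => E n.down) F]
    (hE : ∀ᶠ k in Filter.atTop, ∀ f : K ⟶ F.obj (E k), f = 0) (g : K ⟶ F.obj (seqCoprod C E)) :
    ∃ n : ℕ, End.of (F.map (seqShift e)) ^ n • g = 0 := by
  set s := End.of (F.map (seqShift e)) with hs
  have hstep (k : ℕ) (a : K ⟶ F.obj (E k)) :
      s • (a ≫ F.map (seqInj C E k)) = (a ≫ F.map (e k)) ≫ F.map (seqInj C E (k + 1)) := by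
    rw [End.smul_right, hs, End.of, Category.assoc, ← F.map_comp, seqInj_comp_seqShift, F.map_comp,
      Category.assoc]
  obtain ⟨N, hN⟩ := Filter.eventually_atTop.1 hE
  have hinj (k : ℕ) (a : K ⟶ F.obj (E k)) : ∃ n : ℕ, s ^ n • (a ≫ F.map (seqInj C E k)) = 0 := by
    generalize hd : N - k = d
    induction d generalizing k with
    | zero => exact ⟨0, by rw [hN k (by lia) a, zero_comp, smul_zero]⟩
    | succ d ih =>
      obtain ⟨n, hn⟩ := ih (k + 1) (a ≫ F.map (e k)) (by lia)
      exact ⟨n + 1, by rw [pow_succ, mul_smul, hstep, hn]⟩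
  exact hK.hom_coproduct_induction F
    (P := fun g : K ⟶ F.obj (seqCoprod C E) => ∃ n : ℕ, s ^ n • g = 0)
    ⟨0, smul_zero (A := K ⟶ F.obj (seqCoprod C E)) _⟩
    (fun _ _ => exists_pow_smul_add_eq_zero) (fun i => hinj i.down) g

end IsCompactObj

namespace IsHocolim

variable {E : ℕ → C} {e : ∀ n, E n ⟶ E (n + 1)} {H : C} {π : seqCoprod C E ⟶ H}
  {δ : H ⟶ (seqCoprod C E)⟦(1 : ℤ)⟧}

theorem eq_zero_of_isCompactObj (hH : IsHocolim C E e H π δ) {K : C} (hK : IsCompactObj C K)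
    (hE : ∀ᶠ k in Filter.atTop, ∀ f : K ⟶ E k, f = 0)
    (hE' : ∀ᶠ k in Filter.atTop, ∀ f : K ⟶ (E k)⟦(1 : ℤ)⟧, f = 0) (f : K ⟶ H) : f = 0 := by
  have hfδ : f ≫ δ = 0 := by
    refine eq_zero_of_one_sub_smul_eq_zero
      (hK.exists_seqShift_pow_smul_eq_zero e (shiftFunctor C (1 : ℤ)) hE' (f ≫ δ)) ?_
    have hδ : δ ≫ (oneMinusShift C E e)⟦(1 : ℤ)⟧' = 0 := comp_distTriang_mor_zero₃₁ _ hH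
    rw [oneMinusShift_eq, Functor.map_sub, CategoryTheory.Functor.map_id] at hδ
    exact (Category.assoc f δ _).trans (by rw [End.one_def, hδ, comp_zero])
  obtain ⟨g, rfl⟩ : ∃ g : K ⟶ seqCoprod C E, f = g ≫ π := Triangle.coyoneda_exact₃ _ hH f hfδ
  obtain ⟨g', rfl⟩ : ∃ g' : K ⟶ seqCoprod C E, g' ≫ oneMinusShift C E e = g := by
    rw [oneMinusShift_eq]
    exact exists_one_sub_smul_eq (hK.exists_seqShift_pow_smul_eq_zero e (𝟭 C) hE g)
  rw [Category.assoc, show oneMinusShift C E e ≫ π = 0 from comp_distTriang_mor_zero₁₂ _ hH,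
    comp_zero]

theorem cocone_eq_zero (hH : IsHocolim C E e H π δ) (hzero : IsZero H) {t : C}
    (τ : ∀ k, E k ⟶ t) (hτ : ∀ k, e k ≫ τ (k + 1) = τ k) (k : ℕ) : τ k = 0 := by
  let u : seqCoprod C E ⟶ t := Sigma.desc fun n => τ n.down
  have hu (n : ℕ) : seqInj C E n ≫ u = τ n := Sigma.ι_desc _ _
  have hshift : oneMinusShift C E e ≫ u = 0 := Sigma.hom_ext _ _ fun n => by
    change seqInj C E n.down ≫ _ = seqInj C E n.down ≫ _
    rw [← Category.assoc, seqInj_comp_oneMinusShift, Preadditive.sub_comp, Category.assoc, hu, hu,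
      hτ, sub_self, comp_zero]
  obtain ⟨v, hv⟩ : ∃ v : H ⟶ t, u = π ≫ v := Triangle.yoneda_exact₂ _ hH u hshift
  rw [← hu, hv, hzero.eq_of_src v 0, comp_zero, comp_zero]

end IsHocolim

theorem exists_seq_factorization {C : Type u} [Category.{v} C] [HasZeroObject C] [HasShift C ℤ]
    [Preadditive C] [∀ n : ℤ, (shiftFunctor C n).Additive] [Pretriangulated C]
    {L P : ℕ → Set C} (hL : ∀ k, L k ⊆ starSet C (P k) (L (k + 1))) {X t : C} (hX : X ∈ L 0)
    (ht : ∀ k, t ∈ rOrth C (P k)) (f : X ⟶ t) :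
    ∃ (E : ℕ → C) (e : ∀ k, E k ⟶ E (k + 1)) (τ : ∀ k, E k ⟶ t) (i : X ⟶ E 0),
      (∀ k, E k ∈ L k) ∧ (∀ k, e k ≫ τ (k + 1) = τ k) ∧ i ≫ τ 0 = f := by
  have hstep (k : ℕ) (p : {p : Over t // p.left ∈ L k}) :
      ∃ q : {q : Over t // q.left ∈ L (k + 1)}, Nonempty (p.1 ⟶ q.1) := by
    obtain ⟨E, D, a, b, c, hT, hE, hD⟩ := hL k p.2
    obtain ⟨τ, hτ⟩ : ∃ τ : D ⟶ t, p.1.hom = b ≫ τ :=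
      Triangle.yoneda_exact₂ _ hT p.1.hom (ht k E hE _)
    exact ⟨⟨Over.mk τ, hD⟩, ⟨Over.homMk b hτ.symm⟩⟩
  choose next e using hstep
  let p (k : ℕ) : {p : Over t // p.left ∈ L k} := Nat.rec ⟨Over.mk f, hX⟩ next k
  exact ⟨fun k => (p k).1.left, fun k => (e k (p k)).some.left, fun k => (p k).1.hom, 𝟙 X,
    fun k => (p k).2, fun k => Over.w _, Category.id_comp f⟩

theorem subset_lOrth_of_forall_subset_starSet {𝒢 S : Set C} {L P : ℕ → Set C}
    (hcompact : 𝒢 ⊆ compacts C) (hgen : ∀ X ∈ rOrth C 𝒢, IsZero X)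
    (hL : ∀ k, L k ⊆ starSet C (P k) (L (k + 1))) (hshift : ∀ k, shiftSet C 1 (L (k + 1)) ⊆ L k)
    (h𝒢 : ∀ K ∈ 𝒢, ∀ᶠ k in Filter.atTop, K ∈ lOrth C (L k)) (hS : ∀ k, S ⊆ rOrth C (P k)) :
    L 0 ⊆ lOrth C S := by
  intro X hX t ht f
  obtain ⟨E, e, τ, i, hE, hτ, rfl⟩ := exists_seq_factorization hL hX (fun k => hS k ht) f
  obtain ⟨H, π, δ, hH⟩ := distinguished_cocone_triangle (oneMinusShift C E e)
  have hE₀ (K) (hK : K ∈ 𝒢) : ∀ᶠ k in Filter.atTop, ∀ f : K ⟶ E k, f = 0 :=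
    (h𝒢 K hK).mono fun k hk => hk _ (hE k)
  have hE₁ (K) (hK : K ∈ 𝒢) : ∀ᶠ k in Filter.atTop, ∀ f : K ⟶ (E k)⟦(1 : ℤ)⟧, f = 0 := by
    rw [← Filter.map_add_atTop_eq_nat 1, Filter.eventually_map]
    exact (h𝒢 K hK).mono fun k hk => hk _ (hshift k ⟨_, hE (k + 1), ⟨Iso.refl _⟩⟩)
  have hzero : IsZero H := hgen H fun K hK =>
    IsHocolim.eq_zero_of_isCompactObj hH (hcompact hK) (hE₀ K hK) (hE₁ K hK)
  rw [IsHocolim.cocone_eq_zero hH hzero τ hτ 0, comp_zero]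

end HomotopyColimits

section GeneratingSequences

theorem unionIcc_mono {C : Type u} (G : ℤ → Set C) {a a' b b' : ℤ} (ha : a' ≤ a) (hb : b ≤ b') :
    unionIcc C G a b ⊆ unionIcc C G a' b' :=
  Set.biUnion_subset_biUnion_left (Set.Icc_subset_Icc ha hb)

section

variable {C : Type u} [Category.{v} C] [HasZeroObject C] [HasShift C ℤ] [Preadditive C]
  [∀ n : ℤ, (shiftFunctor C n).Additive] [Pretriangulated C]

theorem extClosure_mono {U V : Set C} (h : U ⊆ V) :
    {X | extClosure C U X} ⊆ {X | extClosure C V X} := by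
  intro X hX
  induction hX with
  | of hX => exact .of (h hX)
  | zero hX => exact .zero hX
  | ext f g k hT _ _ hX hZ => exact .ext f g k hT hX hZ

theorem antitone_MG (G : ℤ → Set C) : Antitone (MG C G) := fun _ _ hij =>
  smd_mono (extClosure_mono
    (Set.biUnion_subset_biUnion_left (Set.Iic_subset_Iic.2 (neg_le_neg hij))))

theorem unionIcc_subset_MG (G : ℤ → Set C) {a b i : ℤ} (hb : b ≤ -i) :
    unionIcc C G a b ⊆ MG C G i :=
  ((Set.biUnion_subset_biUnion_left fun _ hm => hm.2.trans hb).trans fun _ => .of).trans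
    (subset_smd _)

end

variable {C} (G : ℤ → Set C) {a a' b b' k k' : ℤ}

theorem gBarInt_mono (ha : a' ≤ a) (hb : b ≤ b') : gBarInt C G a b ⊆ gBarInt C G a' b' :=
  bigClosure_mono (unionIcc_mono G ha hb)

theorem gBarIntPow_mono (ha : a' ≤ a) (hb : b ≤ b') (hk : k ≤ k') :
    gBarIntPow C G a b k ⊆ gBarIntPow C G a' b' k' :=
  smd_mono ((coprodPowBig_mono_left (unionIcc_mono G ha hb) _).trans
    (monotone_coprodPowBig _ (Int.toNat_le_toNat hk)))

theorem starSet_gBarInt_subset (a b : ℤ) :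
    starSet C (gBarInt C G a b) (gBarInt C G a b) ⊆ gBarInt C G a b := by
  rintro Y ⟨X, Z, f, g, h, hT, hX, hZ⟩
  exact .ext f g h hT hX hZ

theorem starSet_gBarIntPow_subset (a b : ℤ) (hk : 0 ≤ k) (hk' : 0 ≤ k') :
    starSet C (gBarIntPow C G a b k) (gBarIntPow C G a b k') ⊆ gBarIntPow C G a b (k + k') := by
  unfold gBarIntPow
  rw [Int.toNat_add hk hk']
  exact starSet_smd_coprodPowBig_subset _ _ _

theorem IsPreGenSeq.isZero_of_mem_rOrth {G : ℤ → Set C} (hG : IsPreGenSeq C G)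
    (hcg : CompactlyGenerated C) {X : C} (hX : X ∈ rOrth C (unionAll C G)) : IsZero X := by
  rw [← rOrth_bigClosure] at hX
  refine hcg X fun K hK => hX K (smd_extClosure_subset_bigClosure _ ?_)
  rwa [hG.generates]

end GeneratingSequences

namespace MetricNEquiv

variable {C : Type u} {L M N : ℤ → Set C}

theorem symm (h : MetricNEquiv C M N) : MetricNEquiv C N M :=
  let ⟨n, hn, hMN, hNM⟩ := h
  ⟨n, hn, hNM, hMN⟩

theorem trans (h : MetricNEquiv C L M) (h' : MetricNEquiv C M N) : MetricNEquiv C L N := by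
  obtain ⟨m, hm, hLM, hML⟩ := h
  obtain ⟨n, hn, hMN, hNM⟩ := h'
  refine ⟨m + n, add_nonneg hm hn, fun i => ?_, fun i => ?_⟩
  · rw [add_comm m, ← add_assoc]
    exact (hLM _).trans (hMN i)
  · rw [← add_assoc]
    exact (hNM _).trans (hML i)

theorem exists_nat (h : MetricNEquiv C M N) :
    ∃ n : ℕ, (∀ i, M i ⊆ N (i - n)) ∧ ∀ i, N (i + n) ⊆ M i := by
  obtain ⟨n, hn, hMN, hNM⟩ := h
  lift n to ℕ using hn
  exact ⟨n, fun i => by simpa using hMN (i - n), hNM⟩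

end MetricNEquiv

section Approximability

variable {C} {G Rm Rm' : ℤ → Set C} {A A' : ℤ} {N : ℕ}

theorem IsGPreApprox.MG_subset_compacts (h : IsGPreApprox C G Rm A) (i : ℤ) :
    MG C G i ⊆ compacts C := by
  simpa using (h.cond1 (i - A)).trans Set.inter_subset_right

theorem IsGPreApprox.unionAll_subset_compacts (h : IsGPreApprox C G Rm A) :
    unionAll C G ⊆ compacts C :=
  Set.iUnion_subset fun n => (Set.subset_biUnion_of_mem (u := G) (Set.right_mem_Icc.2 le_rfl)).trans
    ((unionIcc_subset_MG G (neg_neg n).ge).trans (h.MG_subset_compacts (-n)))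

theorem IsGPreApprox.RG_subset (h : IsGPreApprox C G Rm A) (i : ℤ) : RG C G (i + A) ⊆ Rm i := by
  rw [← h.orthMetric.orth i]
  exact lOrth_anti (rOrth_anti ((h.cond1 i).trans Set.inter_subset_left))

theorem IsWeakGApprox.subset_RG (h : IsWeakGApprox C G Rm A)
    (hG : ∀ X ∈ rOrth C (unionAll C G), IsZero X) (i : ℤ) : Rm (i + A) ⊆ RG C G i := by
  suffices Rm (i + A + (0 : ℕ)) ⊆ RG C G i by simpa using this
  refine subset_lOrth_of_forall_subset_starSet (L := fun k : ℕ => Rm (i + A + k))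
    (P := fun k => gBarInt C G (-A - (i + A + k)) (A - (i + A + k)))
    h.unionAll_subset_compacts hG (fun k => ?_) (fun k => ?_) (fun K hK => ?_) (fun k => ?_)
  · push_cast
    rw [← add_assoc]
    exact h.approx _
  · push_cast
    rw [← add_assoc]
    exact h.orthMetric.shift_one _
  · obtain ⟨n, hn⟩ := Set.mem_iUnion.1 hK
    filter_upwards [Filter.eventually_ge_atTop (-n - i).toNat] with k hk
    exact h.hom_vanish n _ (by lia) K hn
  · unfold gBarInt
    rw [rOrth_bigClosure]
    exact rOrth_anti (unionIcc_subset_MG G (by lia))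

theorem IsWeakGApprox.metricNEquiv_RG (h : IsWeakGApprox C G Rm A)
    (hG : ∀ X ∈ rOrth C (unionAll C G), IsZero X) : MetricNEquiv C Rm (RG C G) :=
  ⟨A, h.A_pos.le, h.subset_RG hG, h.RG_subset⟩

theorem IsWeakGApprox.subset_starSet_gBarInt (h : IsWeakGApprox C G Rm A) (j : ℤ) (m : ℕ) :
    Rm j ⊆ starSet C (gBarInt C G (-A - j - m) (A - j)) (Rm (j + m)) := by
  suffices Rm (j + (0 : ℕ)) ⊆ _ by simpa using this
  refine subset_starSet_of_forall_subset_starSet (L := fun k : ℕ => Rm (j + k))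
    (A := fun k : ℕ => gBarInt C G (-A - j - k) (A - j))
    (B := fun k : ℕ => gBarInt C G (-A - (j + k)) (A - (j + k)))
    (fun k => h.orthMetric.orth _) (.zero (isZero_zero C)) (fun k => ?_) (fun k => ?_) m
  · exact (starSet_mono (gBarInt_mono G (by lia) le_rfl) (gBarInt_mono G (by lia) (by lia))).trans
      (starSet_gBarInt_subset G _ _)
  · push_cast
    rw [← add_assoc]
    exact h.approx _

theorem IsGApprox.subset_starSet_gBarIntPow (h : IsGApprox C G Rm A) (j : ℤ) (m : ℕ) :
    Rm j ⊆ starSet C (gBarIntPow C G (-A - j - m) (A - j) (m * A)) (Rm (j + m)) := by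
  suffices Rm (j + (0 : ℕ)) ⊆ _ by simpa using this
  have hA : 0 ≤ A := h.A_pos.le
  refine subset_starSet_of_forall_subset_starSet (L := fun k : ℕ => Rm (j + k))
    (A := fun k : ℕ => gBarIntPow C G (-A - j - k) (A - j) (k * A))
    (B := fun k : ℕ => gBarIntPow C G (-A - (j + k)) (A - (j + k)) A)
    (fun k => h.orthMetric.orth _) ?_ (fun k => ?_) (fun k => ?_) m
  · rw [Nat.cast_zero, zero_mul]
    exact subset_smd _ (isZero_zero C)
  · rw [Nat.cast_succ, add_one_mul]
    exact (starSet_mono (gBarIntPow_mono G (by lia) le_rfl le_rfl)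
      (gBarIntPow_mono G (by lia) (by lia) le_rfl)).trans
        (starSet_gBarIntPow_subset G _ _ (by positivity) hA)
  · push_cast
    rw [← add_assoc]
    exact h.approx' _

theorem IsGPreApprox.of_subset (h : IsGPreApprox C G Rm A) (hR' : IsOrthMetric C Rm')
    (hsub : ∀ i, Rm' i ⊆ Rm (i - N)) (hsup : ∀ i, Rm (i + N) ⊆ Rm' i) (hA' : A + N ≤ A') :
    IsGPreApprox C G Rm' A' where
  orthMetric := hR'
  A_pos := by linarith [h.A_pos]
  cond0 i := (h.cond0 i).trans
    (Set.biUnion_subset_biUnion_left fun n (hn : |n| ≤ A) => hn.trans (by lia))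
  cond1 i := Set.subset_inter
    ((antitone_MG G (by lia)).trans
      (((h.cond1 (i + N)).trans Set.inter_subset_left).trans (hsup i)))
    (h.MG_subset_compacts _)
  cond2 n := by
    obtain ⟨M, hM⟩ := h.cond2 n
    exact ⟨M + N, fun i hi K hK X hX => hM (i - N) (by lia) K hK X (hsub i hX)⟩

theorem IsWeakGApprox.of_subset (h : IsWeakGApprox C G Rm A) (hR' : IsOrthMetric C Rm')
    (hsub : ∀ i, Rm' i ⊆ Rm (i - N)) (hsup : ∀ i, Rm (i + N) ⊆ Rm' i) (hA' : A + N + 1 ≤ A') :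
    IsWeakGApprox C G Rm' A' where
  toIsGPreApprox := h.toIsGPreApprox.of_subset hR' hsub hsup (by lia)
  hom_vanish n i hni K hK X hX := h.hom_vanish n (i - N) (by lia) K hK X (hsub i hX)
  approx i := by
    have hstar := h.subset_starSet_gBarInt (i - N) (2 * N + 1)
    rw [show i - N + (2 * N + 1 : ℕ) = i + 1 + N by lia] at hstar
    exact (hsub i).trans (hstar.trans
      (starSet_mono (gBarInt_mono G (by lia) (by lia)) (hsup (i + 1))))

theorem IsGApprox.of_subset (h : IsGApprox C G Rm A) (hR' : IsOrthMetric C Rm')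
    (hsub : ∀ i, Rm' i ⊆ Rm (i - N)) (hsup : ∀ i, Rm (i + N) ⊆ Rm' i) (hA' : A + N + 1 ≤ A')
    (hA'' : (2 * N + 1) * A ≤ A') : IsGApprox C G Rm' A' where
  toIsWeakGApprox := h.toIsWeakGApprox.of_subset hR' hsub hsup hA'
  approx' i := by
    have hstar := h.subset_starSet_gBarIntPow (i - N) (2 * N + 1)
    rw [show i - N + (2 * N + 1 : ℕ) = i + 1 + N by lia] at hstar
    exact (hsub i).trans (hstar.trans
      (starSet_mono (gBarIntPow_mono G (by lia) (by lia) (by exact_mod_cast hA'')) (hsup (i + 1))))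

theorem IsWeakGApprox.exists_of_metricNEquiv (h : IsWeakGApprox C G Rm A)
    (hR' : IsOrthMetric C Rm') (hequiv : MetricNEquiv C Rm' Rm) :
    ∃ A' : ℤ, IsWeakGApprox C G Rm' A' :=
  let ⟨_, hsub, hsup⟩ := hequiv.exists_nat
  ⟨_, h.of_subset hR' hsub hsup le_rfl⟩

theorem IsGApprox.exists_of_metricNEquiv (h : IsGApprox C G Rm A)
    (hR' : IsOrthMetric C Rm') (hequiv : MetricNEquiv C Rm' Rm) :
    ∃ A' : ℤ, IsGApprox C G Rm' A' :=
  let ⟨_, hsub, hsup⟩ := hequiv.exists_nat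
  ⟨_, h.of_subset hR' hsub hsup (le_max_left _ _) (le_max_right _ _)⟩

end Approximability

theorem statement_11_general (G Rm' : ℤ → Set C)
    (hG : ∀ X ∈ rOrth C (unionAll C G), IsZero X)
    (hR' : IsOrthMetric C Rm') (hequiv : MetricNEquiv C Rm' (RG C G))
    (h : ∃ (Rm : ℤ → Set C) (A : ℤ), IsWeakGApprox C G Rm A) :
    (∃ A' : ℤ, IsWeakGApprox C G Rm' A') ∧
    ((∃ (Rm : ℤ → Set C) (A : ℤ), IsGApprox C G Rm A) →
      ∃ A' : ℤ, IsGApprox C G Rm' A') := by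
  constructor
  · obtain ⟨Rm, A, hRm⟩ := h
    exact hRm.exists_of_metricNEquiv hR' (hequiv.trans (hRm.metricNEquiv_RG hG).symm)
  · rintro ⟨Rm, A, hRm⟩
    exact hRm.exists_of_metricNEquiv hR' (hequiv.trans (hRm.metricNEquiv_RG hG).symm)

theorem statement_11 (G Rm' : ℤ → Set C)
    (hcg : CompactlyGenerated C) (hG : IsGenSeq C G)
    (hR' : IsOrthMetric C Rm') (hequiv : MetricNEquiv C Rm' (RG C G))
    (h : ∃ (Rm : ℤ → Set C) (A : ℤ), IsWeakGApprox C G Rm A) :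
    (∃ A' : ℤ, IsWeakGApprox C G Rm' A') ∧
    ((∃ (Rm : ℤ → Set C) (A : ℤ), IsGApprox C G Rm A) →
      ∃ A' : ℤ, IsGApprox C G Rm' A') := by
  exact statement_11_general C G Rm' (fun _ => hG.isZero_of_mem_rOrth hcg) hR' hequiv h

end GApprox
end
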